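/- arXiv:1706.00518 — 7 statements merged into one kernel-verified Lean document; each statement's English description precedes it below -/
import Mathlib

section
/- Let V be a vector space over F of finite positive dimension and let C, D ∈ End(V) satisfy (qCD − q^{−1}DC)/(q − q^{−1}) = I. Then for every nonzero θ ∈ F, the eigenspaces V_C(θ) and V_D(θ^{−1}) have the same dimension. -/
/-!
Put `r = q²` and `Y = DC - 1`. The relation says `CD - 1 = r⁻¹ Y`, hence `YC = r CY` and
`YD = r⁻¹ DY`.

`Y` is nilpotent (`isNilpotent_of_relation`). Otherwise `Y` has an eigenvector with eigenvalue
`μ ≠ 0`. Powers of `C` multiply the eigenvalue by powers of `r`, so some power of `C` kills the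
vector; the last nonzero vector `w` has `Cw = 0`, so `Yw = -w`. Powers of `D` applied to `w` in turn
end in some `u ≠ 0` with `Du = 0` and `Yu = -r⁻ᵐ u`; but `Du = 0` forces `Yu = -r u`, so
`r ^ (m + 1) = 1`, which is impossible.

A (truncated) `q`-exponential `E = ∑ cₙ Yⁿ` solving `E(Y) = (1 + Y) E(rY)` then makes sense, is
invertible, and satisfies `D E C = E`. Thus `E` maps the `θ`-eigenspace of `C` injectively into the
`θ⁻¹`-eigenspace of `D` (`finrank_eigenspace_le`). The relation is symmetric under exchanging
`C, D` and replacing `r` by `r⁻¹`, which gives the opposite inequality.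
-/

noncomputable section

section QExponential

variable {F : Type} [Field F] {V : Type} [AddCommGroup V] [Module F V]

/-- If `A` rescales the eigenvalues of `Y` by `s`, not a root of unity, then iterating `A` on an
eigenvector with nonzero eigenvalue ends in an eigenvector killed by `A`. -/
lemma exists_last_eigenvector [FiniteDimensional F V] (s : F) (hs0 : s ≠ 0)
    (hs : ∀ n : ℕ, 0 < n → s ^ n ≠ 1) (A Y : Module.End F V) (h : Y * A = s • (A * Y))
    (μ : F) (hμ : μ ≠ 0) (v : V) (hv : v ≠ 0) (hYv : Y v = μ • v) :
    ∃ (n : ℕ) (u : V), u ≠ 0 ∧ A u = 0 ∧ Y u = (s ^ n * μ) • u := by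
  have key : ∀ n : ℕ, Y ((A ^ n) v) = (s ^ n * μ) • (A ^ n) v := by
    intro n
    induction n with
    | zero => simpa using hYv
    | succ n ih =>
      have h1 : Y (A ((A ^ n) v)) = s • A (Y ((A ^ n) v)) := by
        simpa using congrArg (fun f : Module.End F V => f ((A ^ n) v)) h
      rw [pow_succ', Module.End.mul_apply, h1, ih, map_smul, smul_smul]
      congr 1
      ring
  have hex : ∃ n : ℕ, (A ^ n) v = 0 := by
    by_contra! hne
    have hinj : Function.Injective (fun n : ℕ => s ^ n * μ) := by
      intro a b hab
      have hab' : s ^ a = s ^ b := mul_right_cancel₀ hμ hab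
      by_contra hne'
      rcases lt_or_gt_of_ne hne' with hlt | hlt
      · apply hs (b - a) (by omega)
        apply mul_left_cancel₀ (pow_ne_zero a hs0)
        rw [← pow_add, mul_one, hab']
        congr 1
        omega
      · apply hs (a - b) (by omega)
        apply mul_left_cancel₀ (pow_ne_zero b hs0)
        rw [← pow_add, mul_one, ← hab']
        congr 1
        omega
    refine Set.infinite_range_of_injective hinj
      ((Module.End.finite_hasEigenvalue Y).subset ?_)
    rintro _ ⟨n, rfl⟩
    exact Module.End.hasEigenvalue_of_hasEigenvector
      ⟨Module.End.mem_eigenspace_iff.mpr (key n), hne n⟩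
  classical
  obtain ⟨m, hm⟩ : ∃ m, Nat.find hex = m + 1 := by
    refine Nat.exists_eq_succ_of_ne_zero fun h0 => hv ?_
    have := Nat.find_spec hex
    rw [h0] at this
    simpa using this
  refine ⟨m, (A ^ m) v, Nat.find_min hex (by omega), ?_, key m⟩
  have := Nat.find_spec hex
  rwa [hm, pow_succ', Module.End.mul_apply] at this

lemma left_commutation (r : F) (C D : Module.End F V) (h : D * C - 1 = r • (C * D - 1)) :
    (D * C - 1) * C = r • (C * (D * C - 1)) := by
  rw [h, smul_mul_assoc, sub_mul, mul_assoc, one_mul, ← h, mul_sub, mul_one]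

lemma right_commutation (r : F) (hr0 : r ≠ 0) (C D : Module.End F V)
    (h : D * C - 1 = r • (C * D - 1)) :
    (D * C - 1) * D = r⁻¹ • (D * (D * C - 1)) := by
  nth_rewrite 2 [h]
  rw [mul_smul_comm, smul_smul, inv_mul_cancel₀ hr0, one_smul, mul_sub, sub_mul, mul_assoc,
    one_mul, mul_one]

lemma isNilpotent_of_relation [IsAlgClosed F] [FiniteDimensional F V] (r : F) (hr0 : r ≠ 0)
    (hr : ∀ n : ℕ, 0 < n → r ^ n ≠ 1) (C D : Module.End F V)
    (h : D * C - 1 = r • (C * D - 1)) : IsNilpotent (D * C - 1) := by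
  have hzero : ∀ μ : F, μ ≠ 0 → ¬ (D * C - 1).HasEigenvalue μ := by
    intro μ hμ hev
    obtain ⟨v, hv⟩ := hev.exists_hasEigenvector
    obtain ⟨n, w, hw, hCw, hYw⟩ := exists_last_eigenvector r hr0 hr C _
      (left_commutation r C D h) μ hμ v hv.2 (Module.End.mem_eigenspace_iff.mp hv.1)
    have hYw' : (D * C - 1) w = (-1 : F) • w := by simp [hCw]
    obtain ⟨m, u, hu, hDu, hYu⟩ := exists_last_eigenvector r⁻¹ (inv_ne_zero hr0)
      (fun n hn => by simpa using hr n hn) D _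
      (right_commutation r hr0 C D h) (-1) (by simp) w hw hYw'
    have hYu' : (D * C - 1) u = (-r) • u := by
      rw [h]
      simp [hDu]
    have hs : r⁻¹ ^ m * (-1) = -r := smul_left_injective F hu (hYu.symm.trans hYu')
    apply hr (m + 1) (by omega)
    have : r⁻¹ ^ m = r := by linear_combination -hs
    rw [pow_succ]
    nth_rewrite 2 [← this]
    rw [← mul_pow, mul_inv_cancel₀ hr0, one_pow]
  have htop : (D * C - 1).maxGenEigenspace 0 = ⊤ := by
    rw [eq_top_iff, ← Module.End.iSup_maxGenEigenspace_eq_top (D * C - 1)]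
    refine iSup_le fun μ => ?_
    by_cases hμ : μ = 0
    · rw [hμ]
    · have : (D * C - 1).maxGenEigenspace μ = ⊥ := by
        by_contra hne
        refine hzero μ hμ ?_
        rw [Module.End.maxGenEigenspace_eq] at hne
        exact Module.End.hasEigenvalue_of_hasGenEigenvalue hne
      rw [this]
      exact bot_le
  rw [Module.End.maxGenEigenspace_eq, Module.End.genEigenspace_nat] at htop
  simp only [zero_smul, sub_zero] at htop
  exact ⟨_, LinearMap.ker_eq_top.mp htop⟩

/-- Coefficients of the power series `p` with `p 0 = 1` and `p(Y) = (1 + Y) p(rY)`,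
a form of the `q`-exponential. -/
def qExpCoeff (r : F) : ℕ → F
  | 0 => 1
  | n + 1 => (1 - r ^ (n + 1))⁻¹ * r ^ n * qExpCoeff r n

/-- The functional equation `p(Y) = (1 + Y) p(rY)` for truncations of `p`, with its error term. -/
lemma qExp_functional_equation (r : F) (hr : ∀ n : ℕ, 0 < n → r ^ n ≠ 1) (Y : Module.End F V)
    (N : ℕ) :
    (1 + Y) * ∑ n ∈ Finset.range N, (qExpCoeff r n * r ^ n) • Y ^ n =
      ∑ n ∈ Finset.range N, qExpCoeff r n • Y ^ n +
        ((1 - r ^ N) * qExpCoeff r N) • Y ^ N := by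
  induction N with
  | zero => simp
  | succ N ih =>
    have hc : (1 - r ^ (N + 1)) * qExpCoeff r (N + 1) = qExpCoeff r N * r ^ N := by
      have : 1 - r ^ (N + 1) ≠ 0 := sub_ne_zero.mpr (hr (N + 1) (by omega)).symm
      rw [qExpCoeff]
      field_simp
    rw [Finset.sum_range_succ, Finset.sum_range_succ, mul_add, ih, hc, mul_smul_comm, add_mul,
      one_mul, ← pow_succ']
    module

lemma finrank_eigenspace_le [IsAlgClosed F] [FiniteDimensional F V] (r : F) (hr0 : r ≠ 0)
    (hr : ∀ n : ℕ, 0 < n → r ^ n ≠ 1) (C D : Module.End F V)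
    (h : D * C - 1 = r • (C * D - 1)) (θ : F) (hθ : θ ≠ 0) :
    Module.finrank F (C.eigenspace θ) ≤ Module.finrank F (D.eigenspace θ⁻¹) := by
  have hYC := left_commutation r C D h
  have hnil := isNilpotent_of_relation r hr0 hr C D h
  have hDC : D * C = 1 + (D * C - 1) := by abel
  generalize D * C - 1 = Y at hYC hnil hDC
  obtain ⟨N, hN⟩ := hnil
  -- one term more than needed, so that the constant term is present even if `N = 0`
  have hN1 : Y ^ (N + 1) = 0 := by rw [pow_succ, hN, zero_mul]
  set E : Module.End F V := ∑ n ∈ Finset.range (N + 1), qExpCoeff r n • Y ^ n with hE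
  have hpow : ∀ n : ℕ, Y ^ n * C = r ^ n • (C * Y ^ n) := by
    intro n
    induction n with
    | zero => simp
    | succ n ih =>
      rw [pow_succ', mul_assoc, ih, mul_smul_comm, ← mul_assoc, hYC, smul_mul_assoc, smul_smul,
        mul_assoc, ← pow_succ, ← pow_succ']
  have hEC : E * C = C * ∑ n ∈ Finset.range (N + 1), (qExpCoeff r n * r ^ n) • Y ^ n := by
    rw [hE, Finset.sum_mul, Finset.mul_sum]
    refine Finset.sum_congr rfl fun n _ => ?_
    rw [smul_mul_assoc, hpow, smul_smul, mul_smul_comm]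
  have hDEC : D * (E * C) = E := by
    rw [hEC, ← mul_assoc, hDC, qExp_functional_equation r hr, hN1, smul_zero, add_zero]
  have hunit : IsUnit E := by
    have hE1 : E = Y * (∑ n ∈ Finset.range N, qExpCoeff r (n + 1) • Y ^ n) + 1 := by
      rw [hE, Finset.sum_range_succ', Finset.mul_sum]
      congr 1
      · refine Finset.sum_congr rfl fun n _ => ?_
        rw [mul_smul_comm, ← pow_succ']
      · simp [qExpCoeff]
    rw [hE1]
    refine IsNilpotent.isUnit_add_one (Commute.isNilpotent_mul_right ?_ ⟨N, hN⟩)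
    exact Commute.sum_right _ _ _ fun n _ => ((Commute.refl Y).pow_right n).smul_right _
  have hinj : Function.Injective E := ((Module.End.isUnit_iff E).mp hunit).injective
  have hmaps : ∀ x ∈ C.eigenspace θ, E x ∈ D.eigenspace θ⁻¹ := by
    intro x hx
    rw [Module.End.mem_eigenspace_iff] at hx ⊢
    have h1 : D (E (C x)) = E x := congrArg (fun f : Module.End F V => f x) hDEC
    rw [hx, map_smul, map_smul] at h1
    rw [← h1, smul_smul, inv_mul_cancel₀ hθ, one_smul, h1]
  refine LinearMap.finrank_le_finrank_of_injective (f := E.restrict hmaps) ?_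
  intro x y hxy
  exact Subtype.ext (hinj (congrArg Subtype.val hxy))

end QExponential

theorem stmt3 (F : Type) [Field F] [IsAlgClosed F] [CharZero F] (q : F) (hq0 : q ≠ 0)
    (hq1 : ∀ n : ℕ, 0 < n → q ^ n ≠ 1)
    (V : Type) [AddCommGroup V] [Module F V] [FiniteDimensional F V]
    (hV : 0 < Module.finrank F V) (C D : Module.End F V)
    (hCD : (q - q⁻¹)⁻¹ • (q • (C * D) - q⁻¹ • (D * C)) = (1 : Module.End F V))
    (θ : F) (hθ : θ ≠ 0) :
    Module.finrank F ↥(Module.End.eigenspace C θ) =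
      Module.finrank F ↥(Module.End.eigenspace D θ⁻¹) := by
  have hr0 : q ^ 2 ≠ 0 := pow_ne_zero 2 hq0
  have hr : ∀ n : ℕ, 0 < n → (q ^ 2) ^ n ≠ 1 := by
    intro n hn
    rw [← pow_mul]
    exact hq1 _ (by omega)
  have hne : q - q⁻¹ ≠ 0 := by
    intro h0
    apply hq1 2 (by omega)
    field_simp at h0
    linear_combination h0
  have h1 : q • (C * D) - q⁻¹ • (D * C) = (q - q⁻¹) • (1 : Module.End F V) := by
    rw [← hCD, smul_smul, mul_inv_cancel₀ hne, one_smul]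
  have h2 : D * C - 1 = q ^ 2 • (C * D - 1) := by
    have h3 := congrArg (fun f => q • f) h1
    simp only [smul_sub, smul_smul, sub_smul, mul_inv_cancel₀ hq0, one_smul] at h3
    rw [smul_sub, pow_two, ← sub_eq_zero]
    rw [← sub_eq_zero] at h3
    rw [← neg_eq_zero, ← h3]
    abel
  have h3 : C * D - 1 = (q ^ 2)⁻¹ • (D * C - 1) := by
    rw [h2, smul_smul, inv_mul_cancel₀ hr0, one_smul]
  apply le_antisymm
  · exact finrank_eigenspace_le (q ^ 2) hr0 hr C D h2 θ hθ
  · have := finrank_eigenspace_le (q ^ 2)⁻¹ (inv_ne_zero hr0)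
      (fun n hn => by rw [inv_pow]; simpa using hr n hn) D C h3 θ⁻¹ (inv_ne_zero hθ)
    rwa [inv_inv] at this
end
end

section
/- Let V be a finite-dimensional vector space over F, let C, D ∈ End(V), and let θ ∈ F be nonzero. Then the following are equivalent: (i) (C³D − [3]_q C²DC + [3]_q CDC² − DC³)v = 0 for every v in the eigenspace V_C(θ) = ker(C − θI); (ii) D V_C(θ) ⊆ V_C(q²θ) + V_C(θ) + V_C(q^{−2}θ). -/
/-!
On an eigenvector `v` of `C` with eigenvalue `θ`, the cubic expression in `C, D` becomes
`(C³ - [3] θ C² + [3] θ² C - θ³) (D v)`. Since `[3] = q² + 1 + q⁻²`, this polynomial in `C` factors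
as `(C - q²θ)(C - θ)(C - q⁻²θ)`, and its three roots are distinct because `θ ≠ 0` and `q` is not a
root of unity. The kernel of a product of three distinct linear factors in `C` is the sum of the
three eigenspaces (`cubic_apply_eq_zero_iff`), by Lagrange interpolation.
-/

noncomputable section

/-- The kernel of `(C - a)(C - b)(C - c)`, written in expanded form, is the sum of the three
eigenspaces when `a, b, c` are distinct. -/
theorem cubic_apply_eq_zero_iff {F V : Type} [Field F] [AddCommGroup V] [Module F V]
    (C : Module.End F V) {a b c : F} (hab : a ≠ b) (hac : a ≠ c) (hbc : b ≠ c) (w : V) :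
    C (C (C w)) - (a + b + c) • C (C w) + (a * b + b * c + c * a) • C w - (a * b * c) • w = 0 ↔
      w ∈ Module.End.eigenspace C a ⊔ Module.End.eigenspace C b ⊔ Module.End.eigenspace C c := by
  have h1 : a - b ≠ 0 := sub_ne_zero.2 hab
  have h2 : a - c ≠ 0 := sub_ne_zero.2 hac
  have h3 : b - c ≠ 0 := sub_ne_zero.2 hbc
  constructor
  · intro h
    have h' : C (C (C w)) =
        (a + b + c) • C (C w) - (a * b + b * c + c * a) • C w + (a * b * c) • w := by
      rw [← sub_eq_zero, ← h]; module
    -- Each Lagrange component of `w` is obtained by applying two of the three factors.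
    have key : ∀ x y z : F, x + y + z = a + b + c → x * y + y * z + z * x = a * b + b * c + c * a →
        x * y * z = a * b * c → ∀ k : F,
        k • (C (C w) - (y + z) • C w + (y * z) • w) ∈ Module.End.eigenspace C x := by
      intro x y z e1 e2 e3 k
      refine Submodule.smul_mem _ _ ?_
      rw [Module.End.mem_eigenspace_iff]
      simp only [map_add, map_sub, map_smul, h', ← e1, ← e2, ← e3]
      module
    have ha := key a b c rfl rfl rfl ((a - b) * (a - c))⁻¹
    have hb := key b a c (by ring) (by ring) (by ring) (-((a - b) * (b - c))⁻¹)
    have hc := key c a b (by ring) (by ring) (by ring) ((a - c) * (b - c))⁻¹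
    have hw := Submodule.add_mem_sup (Submodule.add_mem_sup ha hb) hc
    convert hw using 1
    match_scalars <;> field_simp <;> ring
  · intro h
    obtain ⟨u, hu, z, hz, rfl⟩ := Submodule.mem_sup.1 h
    obtain ⟨x, hx, y, hy, rfl⟩ := Submodule.mem_sup.1 hu
    rw [Module.End.mem_eigenspace_iff] at hx hy hz
    simp only [map_add, map_smul, hx, hy, hz]
    module

theorem stmt4 (F : Type) [Field F] [IsAlgClosed F] [CharZero F] (q : F) (hq0 : q ≠ 0)
    (hq1 : ∀ n : ℕ, 0 < n → q ^ n ≠ 1)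
    (V : Type) [AddCommGroup V] [Module F V] [FiniteDimensional F V]
    (C D : Module.End F V) (θ : F) (hθ : θ ≠ 0) :
    (∀ v ∈ Module.End.eigenspace C θ,
        (C ^ 3 * D - ((q ^ 3 - (q⁻¹) ^ 3) / (q - q⁻¹)) • (C ^ 2 * D * C) +
          ((q ^ 3 - (q⁻¹) ^ 3) / (q - q⁻¹)) • (C * D * C ^ 2) - D * C ^ 3) v = 0) ↔
      (∀ v ∈ Module.End.eigenspace C θ,
        D v ∈ Module.End.eigenspace C (q ^ 2 * θ) ⊔ Module.End.eigenspace C θ ⊔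
          Module.End.eigenspace C (q ^ (-2 : ℤ) * θ)) := by
  have hz : q ^ (-2 : ℤ) = (q ^ 2)⁻¹ := by rw [zpow_neg]; norm_cast
  have hq2 : q ^ 2 ≠ 1 := hq1 2 (by norm_num)
  have hq4 : q ^ 4 ≠ 1 := hq1 4 (by norm_num)
  have hd : q - q⁻¹ ≠ 0 := by
    intro h
    apply hq2
    field_simp at h
    linear_combination h
  have h3 : (q ^ 3 - (q⁻¹) ^ 3) / (q - q⁻¹) = q ^ 2 + 1 + (q ^ 2)⁻¹ := by
    rw [div_eq_iff hd]; field_simp; ring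
  have hab : q ^ 2 * θ ≠ θ := fun h => hq2 (mul_right_cancel₀ hθ (by rw [h, one_mul]))
  have hac : q ^ 2 * θ ≠ (q ^ 2)⁻¹ * θ := by
    intro h
    have h' := mul_right_cancel₀ hθ h
    apply hq4
    field_simp at h'
    linear_combination h'
  have hbc : θ ≠ (q ^ 2)⁻¹ * θ := by
    intro h
    apply hab
    field_simp at h
    rw [h, one_mul]
  rw [hz, h3]
  refine forall₂_congr fun v hv => ?_
  rw [← cubic_apply_eq_zero_iff C hab hac hbc]
  rw [Module.End.mem_eigenspace_iff] at hv
  refine Eq.congr ?_ rfl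
  simp only [pow_succ, pow_zero, one_mul, LinearMap.sub_apply, LinearMap.add_apply,
    LinearMap.smul_apply, Module.End.mul_apply, hv, map_smul]
  match_scalars <;> field_simp <;> ring
end
end

section
/- Let V be a finite-dimensional irreducible □_q-module. Then for every nonzero θ ∈ F the eigenspaces of the actions of the generators satisfy dim V_{x_0}(θ) = dim V_{x_1}(θ^{−1}) = dim V_{x_2}(θ) = dim V_{x_3}(θ^{−1}). -/
/-!
Write `(x, y) = (x_i, x_{i+1})` for two cyclically adjacent generators acting on `V`, put
`c = q ^ 2` and `n = 1 - x y`. The first defining relation says `c n = 1 - y x`, hence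
`y n = c n y`.

Since `x y` and `y x` have the same eigenvalues in finite dimension, the eigenvalues of `n`
are stable under division by `c`; as `c` is not a root of unity, `0` is the only eigenvalue, so
`n` is nilpotent (`isNilpotent_one_sub_mul`). Let `f(n) = ∑ a_k n ^ k` be the `q`-exponential
determined by `a_0 = 1` and `a_k (1 - c ^ (-k)) = a_{k-1}`. It is invertible, and the recursion
is exactly what makes `y f(n) x = f(n)`; that is, `f(n)` conjugates `x⁻¹` into `y`
(`exists_intertwiner`). So `f(n)` embeds `V_x(θ)` into `V_y(θ⁻¹)`. The relation is symmetric
under exchanging `x` and `y` and inverting `c`, which gives the opposite inequality of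
dimensions.
-/

noncomputable section

open FreeAlgebra

variable (F : Type) [Field F]

/-- The defining relations of the algebra `□_q` (Terwilliger), on the free algebra
with generators `x_i`, `i ∈ ℤ/4ℤ`. -/
inductive BoxRel (q : F) : FreeAlgebra F (ZMod 4) → FreeAlgebra F (ZMod 4) → Prop
  | rel1 (i : ZMod 4) : BoxRel q
      (q • (ι F i * ι F (i + 1)) - q⁻¹ • (ι F (i + 1) * ι F i))
      ((q - q⁻¹) • (1 : FreeAlgebra F (ZMod 4)))
  | rel2 (i : ZMod 4) : BoxRel q
      (ι F i ^ 3 * ι F (i + 2) +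
        ((q ^ 3 - (q⁻¹) ^ 3) / (q - q⁻¹)) • (ι F i * ι F (i + 2) * ι F i ^ 2))
      (((q ^ 3 - (q⁻¹) ^ 3) / (q - q⁻¹)) • (ι F i ^ 2 * ι F (i + 2) * ι F i) +
        ι F (i + 2) * ι F i ^ 3)

/-- The algebra `□_q`, presented by generators and relations. -/
abbrev BoxQ (q : F) : Type := RingQuot (BoxRel F q)

/-- The generators `x_i` of `□_q`. -/
def bx (q : F) (i : ZMod 4) : BoxQ F q :=
  RingQuot.mkAlgHom F (BoxRel F q) (ι F i)

/-- `f` acts semisimply: `V` is spanned by the eigenspaces of `f`. -/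
def SemisimpleOn {V : Type} [AddCommGroup V] [Module F V] (f : Module.End F V) : Prop :=
  (⨆ θ : F, Module.End.eigenspace f θ) = ⊤

/-- The set of (distinct) eigenvalues of `f`. -/
def EigSet {V : Type} [AddCommGroup V] [Module F V] (f : Module.End F V) : Set F :=
  {θ : F | Module.End.eigenspace f θ ≠ ⊥}

/-- The representation `π` of `A` on `V` is irreducible. -/
def IsIrrep {A V : Type} [Ring A] [Algebra F A] [AddCommGroup V] [Module F V]
    (π : A →ₐ[F] Module.End F V) : Prop :=
  Nontrivial V ∧ ∀ W : Submodule F V, (∀ a : A, ∀ v ∈ W, π a v ∈ W) → W = ⊥ ∨ W = ⊤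

/-- Isomorphism of representations of `A`. -/
def RepIso {A V W : Type} [Ring A] [Algebra F A] [AddCommGroup V] [Module F V]
    [AddCommGroup W] [Module F W]
    (π : A →ₐ[F] Module.End F V) (π' : A →ₐ[F] Module.End F W) : Prop :=
  ∃ σ : V ≃ₗ[F] W, ∀ (a : A) (v : V), σ (π a v) = π' a (σ v)

/-- The coefficients of the `q`-exponential `∑ a_k t ^ k`, in the base `c = q ^ 2`. -/
def qexpCoeff {F : Type} [Field F] (c : F) : ℕ → F
  | 0 => 1
  | k + 1 => qexpCoeff c k / (1 - (c ^ (k + 1))⁻¹)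

lemma qexpCoeff_rec {F : Type} [Field F] {c : F} (hc0 : c ≠ 0)
    (hc1 : ∀ k : ℕ, 0 < k → c ^ k ≠ 1) (k : ℕ) :
    qexpCoeff c (k + 1) * c ^ (k + 1) - qexpCoeff c k * c ^ (k + 1) = qexpCoeff c (k + 1) := by
  have h1 : c ^ (k + 1) ≠ 0 := pow_ne_zero _ hc0
  have h2 : c ^ (k + 1) - 1 ≠ 0 := sub_ne_zero.mpr (hc1 _ k.succ_pos)
  have h3 : 1 - (c ^ (k + 1))⁻¹ ≠ 0 := by
    intro h
    apply h2
    rwa [sub_eq_zero, eq_comm, inv_eq_one, ← sub_eq_zero] at h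
  have h4 : qexpCoeff c (k + 1) * (1 - (c ^ (k + 1))⁻¹) = qexpCoeff c k := by
    rw [qexpCoeff, div_mul_cancel₀ _ h3]
  rw [← h4]
  field_simp
  ring

section Pair

variable {F V : Type} [Field F] [AddCommGroup V] [Module F V] [FiniteDimensional F V]

/-- The eigenvalues of `1 - x y` are stable under division by `c`, because `x y` and `y x` have
the same eigenvalues. -/
lemma hasEigenvalue_div {c : F} (hc0 : c ≠ 0) {x y : Module.End F V}
    (hxy : c • (1 - x * y) = 1 - y * x) {μ : F}
    (hμ : Module.End.HasEigenvalue (1 - x * y) μ) :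
    Module.End.HasEigenvalue (1 - x * y) (μ / c) := by
  obtain ⟨v, hv, hv0⟩ := hμ.exists_hasEigenvector
  rw [Module.End.mem_eigenspace_iff] at hv
  have hcn : ∀ w, c • (1 - x * y) w = w - y (x w) := fun w => by
    simpa using LinearMap.congr_fun hxy w
  by_cases hy : y v = 0
  · -- Here `μ = 1`, and `y` is not injective, so `y x` is not surjective and has a kernel.
    have hμ1 : μ = 1 := by
      have h : v = μ • v := by simpa [hy] using hv
      have h' : (1 - μ) • v = 0 := by rw [sub_smul, one_smul, ← h, sub_self]
      exact (sub_eq_zero.mp ((smul_eq_zero.mp h').resolve_right hv0)).symm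
    have hni : ¬ Function.Injective (y * x) := by
      intro hinj
      have hsurj : Function.Surjective (y * x) := LinearMap.injective_iff_surjective.mp hinj
      have hysurj : Function.Surjective y := fun w => by
        obtain ⟨u, hu⟩ := hsurj w
        exact ⟨x u, hu⟩
      exact hv0 (LinearMap.injective_iff_surjective.mpr hysurj (hy.trans (map_zero y).symm))
    rw [injective_iff_map_eq_zero] at hni
    push Not at hni
    obtain ⟨w, hw, hw0⟩ := hni
    have hw' : y (x w) = 0 := hw
    refine Module.End.hasEigenvalue_of_hasEigenvector (x := w) ⟨?_, hw0⟩
    rw [Module.End.mem_eigenspace_iff, hμ1, div_eq_inv_mul, mul_one, eq_inv_smul_iff₀ hc0, hcn w,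
      hw', sub_zero]
  · refine Module.End.hasEigenvalue_of_hasEigenvector (x := y v) ⟨?_, hy⟩
    rw [Module.End.mem_eigenspace_iff, div_eq_inv_mul, mul_smul, eq_inv_smul_iff₀ hc0, hcn]
    have h : v - x (y v) = μ • v := by simpa using hv
    rw [← map_sub, h, map_smul]

lemma isNilpotent_one_sub_mul [IsAlgClosed F] {c : F} (hc0 : c ≠ 0)
    (hc1 : ∀ k : ℕ, 0 < k → c ^ k ≠ 1) {x y : Module.End F V}
    (hxy : c • (1 - x * y) = 1 - y * x) : IsNilpotent (1 - x * y) := by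
  have heig : ∀ μ, Module.End.HasEigenvalue (1 - x * y) μ → μ = 0 := by
    intro μ hμ
    by_contra hμ0
    have hall : ∀ k : ℕ, Module.End.HasEigenvalue (1 - x * y) (μ / c ^ k) := by
      intro k
      induction k with
      | zero => simpa using hμ
      | succ k ih =>
        rw [pow_succ, ← div_div]
        exact hasEigenvalue_div hc0 hxy ih
    have hpow : Function.Injective (fun k : ℕ => c ^ k) := by
      have key : ∀ a b : ℕ, a < b → c ^ a ≠ c ^ b := by
        intro a b hab h
        refine hc1 (b - a) (Nat.sub_pos_of_lt hab) ?_
        apply mul_left_cancel₀ (pow_ne_zero a hc0)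
        rw [← pow_add, Nat.add_sub_cancel' hab.le, mul_one, h]
      intro a b hab
      rcases lt_trichotomy a b with h | h | h
      · exact (key a b h hab).elim
      · exact h
      · exact (key b a h hab.symm).elim
    have hinj : Function.Injective (fun k : ℕ => μ / c ^ k) := by
      intro a b hab
      exact hpow (by simpa [div_eq_mul_inv, hμ0] using hab)
    exact Set.infinite_of_injective_forall_mem hinj hall
      (Module.End.finite_hasEigenvalue (1 - x * y))
  have htop : Module.End.maxGenEigenspace (1 - x * y) 0 = ⊤ := by
    rw [eq_top_iff, ← Module.End.iSup_maxGenEigenspace_eq_top (1 - x * y)]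
    refine iSup_le fun μ => ?_
    by_cases hμ : μ = 0
    · rw [hμ]
    · have : Module.End.maxGenEigenspace (1 - x * y) μ = ⊥ := by
        by_contra h
        rw [Module.End.maxGenEigenspace_eq_genEigenspace_finrank] at h
        exact hμ (heig μ (Module.End.hasEigenvalue_of_hasGenEigenvalue
          (k := Module.finrank F V) h))
      rw [this]
      exact bot_le
  refine ⟨Module.finrank F V, ?_⟩
  rw [Module.End.maxGenEigenspace_eq_genEigenspace_finrank, Module.End.genEigenspace_nat,
    LinearMap.ker_eq_top] at htop
  simpa using htop

/-- The truncated `q`-exponential of the nilpotent element `1 - x y` conjugates `x⁻¹` into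
`y`; the conclusion avoids mentioning `x⁻¹`. -/
lemma exists_intertwiner [IsAlgClosed F] {c : F} (hc0 : c ≠ 0)
    (hc1 : ∀ k : ℕ, 0 < k → c ^ k ≠ 1) {x y : Module.End F V}
    (hxy : c • (1 - x * y) = 1 - y * x) :
    ∃ f : Module.End F V, IsUnit f ∧ y * f * x = f := by
  obtain ⟨N, hN⟩ := isNilpotent_one_sub_mul hc0 hc1 hxy
  have hyn : y * (1 - x * y) = c • ((1 - x * y) * y) := by
    rw [← smul_mul_assoc, hxy]
    noncomm_ring
  have hyx : y * x = 1 - c • (1 - x * y) := by rw [hxy]; abel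
  generalize 1 - x * y = n at hN hyn hyx
  have hynk : ∀ k : ℕ, y * n ^ k = c ^ k • (n ^ k * y) := by
    intro k
    induction k with
    | zero => simp
    | succ k ih =>
      rw [pow_succ, ← mul_assoc, ih, smul_mul_assoc, mul_assoc, hyn, mul_smul_comm, smul_smul,
        ← mul_assoc, ← pow_succ, ← pow_succ]
  have hterm : ∀ k : ℕ, y * n ^ k * x = c ^ k • n ^ k - c ^ (k + 1) • n ^ (k + 1) := by
    intro k
    rw [hynk, smul_mul_assoc, mul_assoc, hyx, mul_sub, mul_one, mul_smul_comm, smul_sub, smul_smul,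
      ← pow_succ, ← pow_succ]
  have hN1 : n ^ (N + 1) = 0 := by rw [pow_succ, hN, zero_mul]
  refine ⟨∑ k ∈ Finset.range (N + 1), qexpCoeff c k • n ^ k, ?_, ?_⟩
  · rw [Finset.sum_range_succ']
    have hfac : ∑ k ∈ Finset.range N, qexpCoeff c (k + 1) • n ^ (k + 1) =
        n * ∑ k ∈ Finset.range N, qexpCoeff c (k + 1) • n ^ k := by
      rw [Finset.mul_sum]
      exact Finset.sum_congr rfl fun k _ => by rw [mul_smul_comm, ← pow_succ']
    have hcomm : Commute n (∑ k ∈ Finset.range N, qexpCoeff c (k + 1) • n ^ k) :=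
      Commute.sum_right _ _ _ fun k _ => ((Commute.refl n).pow_right k).smul_right _
    rw [hfac, pow_zero, qexpCoeff, one_smul]
    exact (hcomm.isNilpotent_mul_right ⟨N, hN⟩).isUnit_add_one
  · have hsum : y * (∑ k ∈ Finset.range (N + 1), qexpCoeff c k • n ^ k) * x =
        ∑ k ∈ Finset.range (N + 1), (qexpCoeff c k * c ^ k) • n ^ k -
          ∑ k ∈ Finset.range (N + 1), (qexpCoeff c k * c ^ (k + 1)) • n ^ (k + 1) := by
      rw [Finset.mul_sum, Finset.sum_mul, ← Finset.sum_sub_distrib]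
      refine Finset.sum_congr rfl fun k _ => ?_
      rw [mul_smul_comm, smul_mul_assoc, hterm, smul_sub, smul_smul, smul_smul]
    -- The top term of the second sum vanishes; the others match after shifting the first sum.
    rw [hsum, Finset.sum_range_succ', Finset.sum_range_succ (fun k =>
      (qexpCoeff c k * c ^ (k + 1)) • n ^ (k + 1)), hN1, smul_zero, add_zero,
      Finset.sum_range_succ' (fun k => qexpCoeff c k • n ^ k), add_sub_right_comm,
      ← Finset.sum_sub_distrib]
    congr 1
    · exact Finset.sum_congr rfl fun k _ => by rw [← sub_smul, qexpCoeff_rec hc0 hc1]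
    · simp

lemma finrank_eigenspace_le_s5 [IsAlgClosed F] {c : F} (hc0 : c ≠ 0)
    (hc1 : ∀ k : ℕ, 0 < k → c ^ k ≠ 1) {x y : Module.End F V}
    (hxy : c • (1 - x * y) = 1 - y * x) {θ : F} (hθ : θ ≠ 0) :
    Module.finrank F (Module.End.eigenspace x θ) ≤
      Module.finrank F (Module.End.eigenspace y θ⁻¹) := by
  obtain ⟨f, hf, hyfx⟩ := exists_intertwiner hc0 hc1 hxy
  have hinj : Function.Injective f := ((Module.End.isUnit_iff f).mp hf).injective
  rw [(Submodule.equivMapOfInjective f hinj _).finrank_eq]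
  refine Submodule.finrank_mono ?_
  rintro _ ⟨v, hv, rfl⟩
  have hv' : x v = θ • v := Module.End.mem_eigenspace_iff.mp hv
  rw [Module.End.mem_eigenspace_iff, eq_inv_smul_iff₀ hθ, ← map_smul, ← map_smul, ← hv']
  exact LinearMap.congr_fun hyfx v

lemma finrank_eigenspace_eq [IsAlgClosed F] {c : F} (hc0 : c ≠ 0)
    (hc1 : ∀ k : ℕ, 0 < k → c ^ k ≠ 1) {x y : Module.End F V}
    (hxy : c • (1 - x * y) = 1 - y * x) {θ : F} (hθ : θ ≠ 0) :
    Module.finrank F (Module.End.eigenspace x θ) =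
      Module.finrank F (Module.End.eigenspace y θ⁻¹) := by
  refine le_antisymm (finrank_eigenspace_le_s5 hc0 hc1 hxy hθ) ?_
  have hyx : c⁻¹ • (1 - y * x) = 1 - x * y := by rw [← hxy, inv_smul_smul₀ hc0]
  have hc1' : ∀ k : ℕ, 0 < k → c⁻¹ ^ k ≠ 1 := fun k hk => by
    rw [inv_pow, ne_eq, inv_eq_one]
    exact hc1 k hk
  have h := finrank_eigenspace_le_s5 (inv_ne_zero hc0) hc1' hyx (inv_ne_zero hθ)
  rwa [inv_inv] at h

end Pair

/-- The first defining relation of `□_q`, as a relation between operators and in the form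
`q ^ 2 (1 - x_i x_{i+1}) = 1 - x_{i+1} x_i`. -/
lemma bx_adjacent {F : Type} [Field F] {q : F} (hq0 : q ≠ 0) {V : Type} [AddCommGroup V]
    [Module F V] (π : BoxQ F q →ₐ[F] Module.End F V) (i : ZMod 4) :
    (q ^ 2) • (1 - π (bx F q i) * π (bx F q (i + 1))) =
      1 - π (bx F q (i + 1)) * π (bx F q i) := by
  have h := congrArg π (RingQuot.mkAlgHom_rel F (BoxRel.rel1 (q := q) i))
  simp only [map_sub, map_smul, map_mul, map_one] at h
  change q • (π (bx F q i) * π (bx F q (i + 1))) - q⁻¹ • (π (bx F q (i + 1)) * π (bx F q i)) =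
    (q - q⁻¹) • 1 at h
  have h' := congrArg (fun z => q • z) h
  simp only [smul_sub, smul_smul, mul_inv_cancel₀ hq0, sub_smul, one_smul] at h'
  rw [smul_sub, pow_two]
  rw [← sub_eq_zero] at h' ⊢
  rw [← neg_eq_zero, ← h']
  abel

/-- For a finite-dimensional irreducible `□_q`-module `V` and nonzero `θ`, the
eigenspaces `V_{x₀}(θ)`, `V_{x₁}(θ⁻¹)`, `V_{x₂}(θ)`, `V_{x₃}(θ⁻¹)` all have the
same dimension. -/
theorem stmt5 [IsAlgClosed F] [CharZero F] (q : F) (hq0 : q ≠ 0)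
    (hq1 : ∀ n : ℕ, 0 < n → q ^ n ≠ 1)
    (V : Type) [AddCommGroup V] [Module F V] [FiniteDimensional F V]
    (π : BoxQ F q →ₐ[F] Module.End F V) (hirr : IsIrrep F π)
    (θ : F) (hθ : θ ≠ 0) :
    Module.finrank F ↥(Module.End.eigenspace (π (bx F q 0)) θ) =
        Module.finrank F ↥(Module.End.eigenspace (π (bx F q 1)) θ⁻¹) ∧
    Module.finrank F ↥(Module.End.eigenspace (π (bx F q 1)) θ⁻¹) =
        Module.finrank F ↥(Module.End.eigenspace (π (bx F q 2)) θ) ∧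
    Module.finrank F ↥(Module.End.eigenspace (π (bx F q 2)) θ) =
        Module.finrank F ↥(Module.End.eigenspace (π (bx F q 3)) θ⁻¹) := by
  have hc0 : q ^ 2 ≠ 0 := pow_ne_zero 2 hq0
  have hc1 : ∀ k : ℕ, 0 < k → (q ^ 2) ^ k ≠ 1 := fun k hk => by
    rw [← pow_mul]
    exact hq1 _ (by positivity)
  refine ⟨finrank_eigenspace_eq hc0 hc1 (bx_adjacent hq0 π 0) hθ, ?_,
    finrank_eigenspace_eq hc0 hc1 (bx_adjacent hq0 π 2) hθ⟩
  have h := finrank_eigenspace_eq hc0 hc1 (bx_adjacent hq0 π 1) (inv_ne_zero hθ)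
  rw [inv_inv] at h
  exact h
end
end

section
/- Let V be a finite-dimensional irreducible □_q-module. Then each generator x_i (i ∈ ℤ/4ℤ) acts semisimply on V (V is spanned by the eigenspaces of the action of x_i). Moreover there exist d ∈ ℕ and a nonzero γ ∈ F such that the set of distinct eigenvalues of the action of x_0 on V and of x_2 on V equals {γ q^{d−2n} : 0 ≤ n ≤ d}, and the set of distinct eigenvalues of the action of x_1 on V and of x_3 on V equals {γ^{−1} q^{d−2n} : 0 ≤ n ≤ d}. -/
/-!
Fix `i` and write `X = x_i`, `Y = x_{i+1}`, `Z = x_{i+2}`, `W = x_{i+3}`, and let `E(θ)` be the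
`θ`-eigenspace of `X`.

The relation between `X` and `Y` gives `(XY - 1) Y = q⁻² Y (XY - 1)`, and since `XY - 1` has
finitely many eigenvalues this forces `X` to be injective (`weyl_injective`). For `θ ≠ 0` the
relations then give

* `(Y - θ⁻¹) E(θ) ⊆ E(q⁻² θ)` and `(W - θ⁻¹) E(θ) ⊆ E(q² θ)` (`weyl_shift`, with `p = q⁻¹` for `W`),
* `Z E(θ) ⊆ E(θ) + E(q² θ) + E(q⁻² θ)` (`serre_mem`), because the cubic relation says that
  `(X - θ)(X - q² θ)(X - q⁻² θ)` kills `Z E(θ)` and the three roots are distinct.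

Hence, if a set `T` of scalars is closed under `θ ↦ q^{±2} θ` up to scalars that are not eigenvalues
of `X`, then the sum of the `E(θ)`, `θ ∈ T`, is a submodule, so it is `0` or `V` (`sum_eq_top`).
With `T = F` this is semisimplicity. With `T` a maximal unbroken `q²`-string of eigenvalues it shows
that the eigenvalues of `X` form exactly one such string.

Finally `Y - θ⁻¹` maps `⨁_{k ≥ 0} E(q^{-2k} θ)` into `⨁_{k ≥ 1} E(q^{-2k} θ)`, which is strictly
smaller if `θ` is an eigenvalue of `X`; so `θ⁻¹` is an eigenvalue of `Y` (`weyl_inv_eigenvalue`).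
The same works with the roles of `X` and `Y` exchanged, so neighbouring generators have mutually
inverse eigenvalues.
-/

noncomputable section

open FreeAlgebra

variable (F : Type) [Field F]

open Module.End

/-! ### Eigenspaces of operators satisfying a single relation -/

section LinearAlgebra

variable {F} {V : Type} [AddCommGroup V] [Module F V]

/-- A geometric progression with infinitely many terms leaves the finite set of eigenvalues. -/
lemma exists_eigenspace_eq_bot [FiniteDimensional F V] (f : Module.End F V) {c p : F}
    (hc : c ≠ 0) (hp0 : p ≠ 0) (hp : ∀ n : ℕ, 0 < n → p ^ n ≠ 1) :
    ∃ k : ℕ, eigenspace f (c * p ^ k) = ⊥ := by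
  by_contra! h
  have hinj : Function.Injective fun k : ℕ => c * p ^ k := by
    have key : ∀ a b : ℕ, a < b → c * p ^ a ≠ c * p ^ b := by
      intro a b hab e
      have e' := mul_left_cancel₀ hc e
      obtain ⟨m, rfl⟩ := Nat.exists_eq_add_of_lt hab
      refine hp (m + 1) (by omega) ?_
      have h2 : p ^ a * p ^ (m + 1) = p ^ a * 1 := by
        rw [← pow_add, mul_one, e']; rfl
      exact mul_left_cancel₀ (pow_ne_zero _ hp0) h2
    intro a b e
    rcases lt_trichotomy a b with h1 | h1 | h1
    · exact absurd e (key a b h1)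
    · exact h1
    · exact absurd e.symm (key b a h1)
  refine Set.infinite_of_injective_forall_mem hinj
    (s := {μ | HasEigenvalue f μ}) (fun k => ?_) (Module.End.finite_hasEigenvalue f)
  exact h k

/-- `qXY - q⁻¹YX = q - q⁻¹` makes `X` injective: if `Xv = 0` then `Y ^ k v` lies in the
`-q^{-2k-2}`-eigenspace of `XY - 1`, so it vanishes for some `k`, and
`X Y ^ (k+1) v = (1 - q^{-2k-2}) Y ^ k v` descends this to `v = 0`. -/
lemma weyl_injective [FiniteDimensional F V] {q : F} (hq0 : q ≠ 0)
    (hq1 : ∀ n : ℕ, 0 < n → (q⁻¹ ^ 2) ^ n ≠ 1) {X Y : Module.End F V}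
    (h : ∀ v, q • X (Y v) - q⁻¹ • Y (X v) = (q - q⁻¹) • v) {v : V} (hv : X v = 0) : v = 0 := by
  have h' : ∀ v, X (Y v) = (q⁻¹ ^ 2) • Y (X v) + (1 - q⁻¹ ^ 2) • v := by
    intro v
    have e : X (Y v) = q⁻¹ • (q • X (Y v)) := by rw [smul_smul, inv_mul_cancel₀ hq0, one_smul]
    rw [e, sub_eq_iff_eq_add.mp (h v)]
    match_scalars <;> field_simp
  have step : ∀ k : ℕ, X (Y ((Y ^ k) v)) = (1 - (q⁻¹ ^ 2) ^ (k + 1)) • (Y ^ k) v := by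
    intro k
    induction k with
    | zero => simp [h', hv]
    | succ k ih =>
      rw [h', pow_succ' Y, Module.End.mul_apply, ih, map_smul]
      match_scalars
      ring
  obtain ⟨k, hk⟩ := exists_eigenspace_eq_bot (X * Y - 1) (c := -(q⁻¹ ^ 2)) (p := q⁻¹ ^ 2)
    (by simpa using hq0) (by simpa using hq0) hq1
  have hz : (Y ^ k) v = 0 := by
    have : (Y ^ k) v ∈ eigenspace (X * Y - 1) (-(q⁻¹ ^ 2) * (q⁻¹ ^ 2) ^ k) := by
      rw [mem_eigenspace_iff, LinearMap.sub_apply, Module.End.mul_apply, step,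
        Module.End.one_apply]
      match_scalars
      ring
    rwa [hk, Submodule.mem_bot] at this
  clear hk
  induction k with
  | zero => simpa using hz
  | succ k ih =>
    apply ih
    have := step k
    rw [← Module.End.mul_apply Y, ← pow_succ', hz, map_zero] at this
    exact (smul_eq_zero.mp this.symm).resolve_left (sub_ne_zero.mpr (hq1 _ (by omega)).symm)

lemma weyl_shift {p : F} (hp0 : p ≠ 0) {X Y : Module.End F V}
    (h : ∀ v, p • X (Y v) - p⁻¹ • Y (X v) = (p - p⁻¹) • v) {θ : F} (hθ : θ ≠ 0) {v : V}
    (hv : v ∈ eigenspace X θ) : Y v - θ⁻¹ • v ∈ eigenspace X (θ * p⁻¹ ^ 2) := by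
  rw [mem_eigenspace_iff] at hv ⊢
  have e : X (Y v) = p⁻¹ • (p • X (Y v)) := by rw [smul_smul, inv_mul_cancel₀ hp0, one_smul]
  rw [map_sub, e, sub_eq_iff_eq_add.mp (h v), hv, map_smul, map_smul, hv]
  match_scalars <;> field_simp <;> ring

/-- A vector killed by `(X - a)(X - b)(X - c)` with distinct `a`, `b`, `c` is a sum of eigenvectors:
its components are given by Lagrange interpolation. -/
lemma mem_of_cubic {X : Module.End F V} {a b c : F} (hab : a ≠ b) (hac : a ≠ c) (hbc : b ≠ c)
    {w : V} (h : X (X (X w)) = (a + b + c) • X (X w) - (a * b + a * c + b * c) • X w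
      + (a * b * c) • w) {U : Submodule F V} (ha : eigenspace X a ≤ U) (hb : eigenspace X b ≤ U)
    (hc : eigenspace X c ≤ U) : w ∈ U := by
  have h1 : X (X w) - (b + c) • X w + (b * c) • w ∈ U := ha <| by
    rw [mem_eigenspace_iff]
    simp only [map_add, map_sub, map_smul, h]
    module
  have h2 : X (X w) - (a + c) • X w + (a * c) • w ∈ U := hb <| by
    rw [mem_eigenspace_iff]
    simp only [map_add, map_sub, map_smul, h]
    module
  have h3 : X (X w) - (a + b) • X w + (a * b) • w ∈ U := hc <| by
    rw [mem_eigenspace_iff]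
    simp only [map_add, map_sub, map_smul, h]
    module
  have hab' := sub_ne_zero.mpr hab
  have hac' := sub_ne_zero.mpr hac
  have hbc' := sub_ne_zero.mpr hbc
  have e : w = ((a - b) * (a - c))⁻¹ • (X (X w) - (b + c) • X w + (b * c) • w)
      - ((a - b) * (b - c))⁻¹ • (X (X w) - (a + c) • X w + (a * c) • w)
      + ((a - c) * (b - c))⁻¹ • (X (X w) - (a + b) • X w + (a * b) • w) := by
    match_scalars <;> field_simp <;> ring
  rw [e]
  exact U.add_mem (U.sub_mem (U.smul_mem _ h1) (U.smul_mem _ h2)) (U.smul_mem _ h3)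

lemma serre_mem {q : F} (hq0 : q ≠ 0) (hq1 : ∀ n : ℕ, 0 < n → q ^ n ≠ 1) {X Z : Module.End F V}
    (h : ∀ v, X (X (X (Z v))) + ((q ^ 3 - (q⁻¹) ^ 3) / (q - q⁻¹)) • X (Z (X (X v))) =
      ((q ^ 3 - (q⁻¹) ^ 3) / (q - q⁻¹)) • X (X (Z (X v))) + Z (X (X (X v))))
    {θ : F} (hθ : θ ≠ 0) {v : V} (hv : v ∈ eigenspace X θ) {U : Submodule F V}
    (ha : eigenspace X θ ≤ U) (hb : eigenspace X (θ * q ^ 2) ≤ U)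
    (hc : eigenspace X (θ * q⁻¹ ^ 2) ≤ U) : Z v ∈ U := by
  rw [mem_eigenspace_iff] at hv
  have hq2 : q ^ 2 ≠ 1 := hq1 2 (by norm_num)
  have hq4 : q ^ 4 ≠ 1 := hq1 4 (by norm_num)
  have hne : q - q⁻¹ ≠ 0 := by
    intro e
    apply hq2
    field_simp at e
    linear_combination e
  have hq3 : (q ^ 3 - (q⁻¹) ^ 3) / (q - q⁻¹) = q ^ 2 + 1 + q⁻¹ ^ 2 := by
    rw [div_eq_iff hne]
    field_simp
    ring
  refine mem_of_cubic (X := X) (a := θ) (b := θ * q ^ 2) (c := θ * q⁻¹ ^ 2) ?_ ?_ ?_ ?_ ha hb hc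
  · intro e
    exact hq2 (mul_left_cancel₀ hθ (by linear_combination -e))
  · intro e
    apply hq2
    field_simp at e
    linear_combination e
  · intro e
    apply hq4
    have e' := mul_left_cancel₀ hθ e
    field_simp at e'
    linear_combination e'
  · have h0 := h v
    rw [hq3] at h0
    simp only [hv, map_smul] at h0
    rw [eq_sub_of_add_eq h0]
    match_scalars <;> field_simp <;> ring

/-- `Y - θ⁻¹` maps `⨆_{k ≥ 0} E(θ p^{-2k})` into the strictly smaller `⨆_{k ≥ 1} E(θ p^{-2k})`. -/
lemma weyl_inv_eigenvalue [FiniteDimensional F V] {p : F} (hp0 : p ≠ 0)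
    (hp1 : ∀ n : ℕ, 0 < n → (p⁻¹ ^ 2) ^ n ≠ 1) {X Y : Module.End F V}
    (h : ∀ v, p • X (Y v) - p⁻¹ • Y (X v) = (p - p⁻¹) • v) {θ : F} (hθ : θ ≠ 0)
    (hE : eigenspace X θ ≠ ⊥) : eigenspace Y θ⁻¹ ≠ ⊥ := by
  intro hbot
  set s : F := p⁻¹ ^ 2 with hs
  have hs0 : s ≠ 0 := by simpa [hs] using hp0
  let U : Submodule F V := ⨆ k : ℕ, eigenspace X (θ * s ^ k)
  let U' : Submodule F V := ⨆ k : ℕ, eigenspace X (θ * s ^ (k + 1))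
  have hinj : Function.Injective (Y - θ⁻¹ • (1 : Module.End F V)) := by
    rw [← LinearMap.ker_eq_bot, LinearMap.ker_eq_bot']
    intro v hv
    have : v ∈ eigenspace Y θ⁻¹ := by
      rw [mem_eigenspace_iff]
      simpa [sub_eq_zero] using hv
    rwa [hbot, Submodule.mem_bot] at this
  have hmap : U.map (Y - θ⁻¹ • (1 : Module.End F V)) ≤ U' := by
    rw [Submodule.map_le_iff_le_comap]
    refine iSup_le fun k v hv => ?_
    have hk : θ * s ^ k ≠ 0 := mul_ne_zero hθ (pow_ne_zero _ hs0)
    have h1 := weyl_shift hp0 h hk hv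
    rw [mul_assoc, ← hs, ← pow_succ] at h1
    have h1' : Y v - (θ * s ^ k)⁻¹ • v ∈ U' :=
      (le_iSup (fun k : ℕ => eigenspace X (θ * s ^ (k + 1))) k) h1
    rw [Submodule.mem_comap, LinearMap.sub_apply, LinearMap.smul_apply, Module.End.one_apply]
    rcases k with _ | k
    · simpa using h1'
    · have h2 : v ∈ U' := (le_iSup (fun k : ℕ => eigenspace X (θ * s ^ (k + 1))) k) hv
      have e : Y v - θ⁻¹ • v = (Y v - (θ * s ^ (k + 1))⁻¹ • v)
          + ((θ * s ^ (k + 1))⁻¹ - θ⁻¹) • v := by module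
      rw [e]
      exact U'.add_mem h1' (U'.smul_mem _ h2)
  have hle : U' ≤ U := iSup_le fun k => le_iSup (fun k : ℕ => eigenspace X (θ * s ^ k)) (k + 1)
  have hU' : Disjoint (eigenspace X θ) U' := by
    refine (eigenspaces_iSupIndep X θ).mono_right (iSup_le fun k => ?_)
    refine le_iSup₂_of_le (θ * s ^ (k + 1)) ?_ le_rfl
    intro e
    exact hp1 (k + 1) (by omega) (mul_left_cancel₀ hθ (by rw [e, mul_one]))
  have hlt : U' < U := by
    refine lt_of_le_of_ne hle fun e => hE ?_
    rw [e] at hU'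
    refine hU'.eq_bot_of_le ?_
    have := le_iSup (fun k : ℕ => eigenspace X (θ * s ^ k)) 0
    simpa using this
  have h1 := Submodule.finrank_lt_finrank_of_lt hlt
  have h2 := Submodule.finrank_mono hmap
  have h3 : Module.finrank F (U.map (Y - θ⁻¹ • (1 : Module.End F V))) = Module.finrank F U :=
    (Submodule.equivMapOfInjective _ hinj U).finrank_eq.symm
  omega

end LinearAlgebra

/-! ### Eigenspaces of the generators on an irreducible module -/

section Box

variable {F} {q : F} {V : Type} [AddCommGroup V] [Module F V] (π : BoxQ F q →ₐ[F] Module.End F V)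

lemma box_weyl (i : ZMod 4) (v : V) :
    q • π (bx F q i) (π (bx F q (i + 1)) v) - q⁻¹ • π (bx F q (i + 1)) (π (bx F q i) v)
      = (q - q⁻¹) • v := by
  have h := RingQuot.mkAlgHom_rel F (BoxRel.rel1 (q := q) i)
  have h2 := congrArg (fun a => π a v) h
  simpa [bx] using h2

lemma box_serre (i : ZMod 4) (v : V) :
    π (bx F q i) (π (bx F q i) (π (bx F q i) (π (bx F q (i + 2)) v)))
      + ((q ^ 3 - (q⁻¹) ^ 3) / (q - q⁻¹)) •
        π (bx F q i) (π (bx F q (i + 2)) (π (bx F q i) (π (bx F q i) v))) =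
    ((q ^ 3 - (q⁻¹) ^ 3) / (q - q⁻¹)) •
        π (bx F q i) (π (bx F q i) (π (bx F q (i + 2)) (π (bx F q i) v)))
      + π (bx F q (i + 2)) (π (bx F q i) (π (bx F q i) (π (bx F q i) v))) := by
  have h := RingQuot.mkAlgHom_rel F (BoxRel.rel2 (q := q) i)
  have h2 := congrArg (fun a => π a v) h
  simpa only [bx, pow_succ, pow_zero, one_mul, map_add, map_mul, map_smul, LinearMap.add_apply,
    LinearMap.smul_apply, Module.End.mul_apply] using h2

/-- A subspace stable under the four generators is stable under `□_q`. -/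
lemma box_stable {U : Submodule F V} (h : ∀ i, ∀ v ∈ U, π (bx F q i) v ∈ U) (a : BoxQ F q) :
    ∀ v ∈ U, π a v ∈ U := by
  obtain ⟨b, rfl⟩ := RingQuot.mkAlgHom_surjective F (BoxRel F q) a
  induction b using FreeAlgebra.induction with
  | grade0 r =>
    intro v hv
    simpa [Algebra.algebraMap_eq_smul_one] using U.smul_mem r hv
  | grade1 i => exact h i
  | mul a b ha hb =>
    intro v hv
    rw [map_mul, map_mul, Module.End.mul_apply]
    exact ha _ (hb v hv)
  | add a b ha hb =>
    intro v hv
    rw [map_add, map_add, LinearMap.add_apply]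
    exact U.add_mem (ha v hv) (hb v hv)

lemma zmod_four_cases (i j : ZMod 4) : j = i ∨ j = i + 1 ∨ j = i + 2 ∨ i = j + 1 := by
  revert i j
  decide

variable [FiniteDimensional F V]

lemma eig_ne_zero (hq0 : q ≠ 0) (hqinv : ∀ n : ℕ, 0 < n → (q⁻¹ ^ 2) ^ n ≠ 1) (i : ZMod 4) {θ : F}
    (hE : eigenspace (π (bx F q i)) θ ≠ ⊥) : θ ≠ 0 := by
  rintro rfl
  apply hE
  rw [eq_bot_iff]
  intro v hv
  rw [mem_eigenspace_iff, zero_smul] at hv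
  exact weyl_injective hq0 hqinv (box_weyl π i) hv

/-- If `T` is closed under multiplication by `q^{±2}` up to scalars that are not eigenvalues of
`x_i`, then the eigenspaces of `x_i` with eigenvalue in `T` span `V`, provided one is nonzero. -/
lemma sum_eq_top (hq0 : q ≠ 0) (hq1 : ∀ n : ℕ, 0 < n → q ^ n ≠ 1)
    (hqinv : ∀ n : ℕ, 0 < n → (q⁻¹ ^ 2) ^ n ≠ 1) (hirr : IsIrrep F π) (i : ZMod 4) (T : Set F)
    (hup : ∀ θ ∈ T, θ * q ^ 2 ∈ T ∨ eigenspace (π (bx F q i)) (θ * q ^ 2) = ⊥)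
    (hdown : ∀ θ ∈ T, θ * q⁻¹ ^ 2 ∈ T ∨ eigenspace (π (bx F q i)) (θ * q⁻¹ ^ 2) = ⊥)
    {θ₀ : F} (hθ₀ : θ₀ ∈ T) (hE : eigenspace (π (bx F q i)) θ₀ ≠ ⊥) :
    ⨆ θ ∈ T, eigenspace (π (bx F q i)) θ = ⊤ := by
  set X := π (bx F q i) with hX
  set U : Submodule F V := ⨆ θ ∈ T, eigenspace X θ with hU
  have hT : ∀ θ, (θ ∈ T ∨ eigenspace X θ = ⊥) → eigenspace X θ ≤ U := by
    rintro θ (h | h)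
    · exact le_iSup₂_of_le θ h le_rfl
    · rw [h]; exact bot_le
  refine (hirr.2 U (box_stable π fun j => ?_)).resolve_left ?_
  · suffices h : U ≤ U.comap (π (bx F q j)) from h
    refine iSup₂_le fun θ hθ => ?_
    by_cases hbot : eigenspace X θ = ⊥
    · rw [hbot]; exact bot_le
    have h0 : θ ≠ 0 := eig_ne_zero π hq0 hqinv i hbot
    intro v hv
    rw [Submodule.mem_comap]
    have hvU : v ∈ U := hT θ (Or.inl hθ) hv
    rcases zmod_four_cases i j with rfl | rfl | rfl | rfl
    · rw [← hX, mem_eigenspace_iff.mp hv]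
      exact U.smul_mem _ hvU
    · have h1 := hT _ (hdown θ hθ) (weyl_shift hq0 (box_weyl π i) h0 hv)
      simpa using U.add_mem h1 (U.smul_mem θ⁻¹ hvU)
    · exact serre_mem hq0 hq1 (box_serre π i) h0 hv (hT _ (Or.inl hθ)) (hT _ (hup θ hθ))
        (hT _ (hdown θ hθ))
    · have h2 := weyl_shift (p := q⁻¹) (inv_ne_zero hq0) (X := X) (Y := π (bx F q j))
        (fun v => by
          have := box_weyl π j v
          rw [inv_inv, ← neg_sub, this]
          module) h0 hv
      rw [inv_inv] at h2
      have h1 := hT _ (hup θ hθ) h2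
      simpa using U.add_mem h1 (U.smul_mem θ⁻¹ hvU)
  · intro e
    apply hE
    rw [eq_bot_iff, ← e]
    exact hT _ (Or.inl hθ₀)

/-- The eigenvalues of `x_i` form a single unbroken `q²`-string. -/
lemma exists_string (hq0 : q ≠ 0) (hq1 : ∀ n : ℕ, 0 < n → q ^ n ≠ 1)
    (hqinv : ∀ n : ℕ, 0 < n → (q⁻¹ ^ 2) ^ n ≠ 1) (hirr : IsIrrep F π) (i : ZMod 4) {θ : F}
    (hE : eigenspace (π (bx F q i)) θ ≠ ⊥) :
    ∃ (d : ℕ) (γ : F), γ ≠ 0 ∧ EigSet F (π (bx F q i)) =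
      {θ : F | ∃ n : ℕ, n ≤ d ∧ θ = γ * q ^ ((d : ℤ) - 2 * (n : ℤ))} := by
  classical
  have hq1s : ∀ n : ℕ, 0 < n → (q ^ 2) ^ n ≠ 1 := fun n hn => by
    rw [← pow_mul]; exact hq1 _ (by omega)
  set X := π (bx F q i) with hX
  have hθ0 : θ ≠ 0 := eig_ne_zero π hq0 hqinv i hE
  -- `t` is the top of the string through `θ`.
  obtain ⟨t, ht, htop⟩ : ∃ t, eigenspace X t ≠ ⊥ ∧ eigenspace X (t * q ^ 2) = ⊥ := by
    have hex := exists_eigenspace_eq_bot X hθ0 (pow_ne_zero 2 hq0) hq1s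
    have hpos : Nat.find hex ≠ 0 := by
      intro e
      have := Nat.find_spec hex
      rw [e, pow_zero, mul_one] at this
      exact hE this
    obtain ⟨m, hm⟩ := Nat.exists_eq_succ_of_ne_zero hpos
    refine ⟨θ * (q ^ 2) ^ m, Nat.find_min hex (by omega), ?_⟩
    have := Nat.find_spec hex
    rwa [hm, Nat.succ_eq_add_one, pow_succ, ← mul_assoc] at this
  have ht0 : t ≠ 0 := eig_ne_zero π hq0 hqinv i ht
  -- `d` is the number of steps down from `t` before the string breaks.
  obtain ⟨d, hd, hbot⟩ : ∃ d : ℕ, (∀ n ≤ d, eigenspace X (t * (q⁻¹ ^ 2) ^ n) ≠ ⊥) ∧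
      eigenspace X (t * (q⁻¹ ^ 2) ^ (d + 1)) = ⊥ := by
    have hex := exists_eigenspace_eq_bot X ht0 (pow_ne_zero 2 (inv_ne_zero hq0)) hqinv
    have hpos : Nat.find hex ≠ 0 := by
      intro e
      have := Nat.find_spec hex
      rw [e, pow_zero, mul_one] at this
      exact ht this
    obtain ⟨m, hm⟩ := Nat.exists_eq_succ_of_ne_zero hpos
    refine ⟨m, fun n hn => Nat.find_min hex (by omega), ?_⟩
    have := Nat.find_spec hex
    rwa [hm] at this
  have hsum := sum_eq_top π hq0 hq1 hqinv hirr i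
    {μ | ∃ n : ℕ, n ≤ d ∧ μ = t * (q⁻¹ ^ 2) ^ n} (by
      rintro μ ⟨n, hn, rfl⟩
      rcases n with _ | n
      · right; simpa using htop
      · left
        refine ⟨n, by omega, ?_⟩
        rw [pow_succ]
        field_simp) (by
      rintro μ ⟨n, hn, rfl⟩
      rcases hn.lt_or_eq with h | rfl
      · left
        exact ⟨n + 1, h, by ring⟩
      · right
        rwa [mul_assoc, ← pow_succ]) (θ₀ := t) ⟨0, by omega, by simp⟩ ht
  refine ⟨d, t * (q ^ d)⁻¹, mul_ne_zero ht0 (inv_ne_zero (pow_ne_zero _ hq0)), ?_⟩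
  have hexp : ∀ n : ℕ, t * (q ^ d)⁻¹ * q ^ ((d : ℤ) - 2 * (n : ℤ)) = t * (q⁻¹ ^ 2) ^ n := by
    intro n
    rw [zpow_sub₀ hq0, zpow_natCast, zpow_mul, zpow_natCast]
    simp only [inv_pow]
    field_simp
  ext μ
  simp only [EigSet, Set.mem_ofPred_eq, hexp]
  constructor
  · intro hμ
    by_contra hnot
    apply hμ
    have h1 : ⨆ j ≠ μ, eigenspace X j = ⊤ := by
      rw [eq_top_iff, ← hsum]
      refine iSup₂_le fun j hj => le_iSup₂_of_le j ?_ le_rfl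
      rintro rfl
      exact hnot hj
    have h2 := eigenspaces_iSupIndep X μ
    rw [h1] at h2
    exact disjoint_top.mp h2
  · rintro ⟨n, hn, rfl⟩
    exact hd n hn

lemma eig_inv (hq0 : q ≠ 0) (hq1 : ∀ n : ℕ, 0 < n → q ^ n ≠ 1)
    (hqinv : ∀ n : ℕ, 0 < n → (q⁻¹ ^ 2) ^ n ≠ 1) (i : ZMod 4) (θ : F) :
    θ ∈ EigSet F (π (bx F q (i + 1))) ↔ θ⁻¹ ∈ EigSet F (π (bx F q i)) := by
  constructor
  · intro hE
    refine weyl_inv_eigenvalue (p := q⁻¹) (inv_ne_zero hq0) (fun n hn => ?_) (fun v => ?_)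
      (eig_ne_zero π hq0 hqinv _ hE) hE
    · rw [inv_inv, ← pow_mul]
      exact hq1 _ (by omega)
    · rw [inv_inv, ← neg_sub, box_weyl π i v]
      module
  · intro hE
    have := weyl_inv_eigenvalue hq0 hqinv (box_weyl π i) (eig_ne_zero π hq0 hqinv _ hE) hE
    rwa [inv_inv] at this

end Box

/-! ### Semisimplicity and the eigenvalue strings -/

/-- Each generator `x_i` of `□_q` acts semisimply on a finite-dimensional irreducible
`□_q`-module; moreover there are `d ∈ ℕ` and nonzero `γ` such that `x₀, x₂` have
eigenvalue set `{γ q^(d-2n)}` and `x₁, x₃` have eigenvalue set `{γ⁻¹ q^(d-2n)}`. -/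
theorem stmt6 [IsAlgClosed F] [CharZero F] (q : F) (hq0 : q ≠ 0)
    (hq1 : ∀ n : ℕ, 0 < n → q ^ n ≠ 1)
    (V : Type) [AddCommGroup V] [Module F V] [FiniteDimensional F V]
    (π : BoxQ F q →ₐ[F] Module.End F V) (hirr : IsIrrep F π) :
    (∀ i : ZMod 4, SemisimpleOn F (π (bx F q i))) ∧
    ∃ (d : ℕ) (γ : F), γ ≠ 0 ∧
      EigSet F (π (bx F q 0)) =
        {θ : F | ∃ n : ℕ, n ≤ d ∧ θ = γ * q ^ ((d : ℤ) - 2 * (n : ℤ))} ∧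
      EigSet F (π (bx F q 2)) =
        {θ : F | ∃ n : ℕ, n ≤ d ∧ θ = γ * q ^ ((d : ℤ) - 2 * (n : ℤ))} ∧
      EigSet F (π (bx F q 1)) =
        {θ : F | ∃ n : ℕ, n ≤ d ∧ θ = γ⁻¹ * q ^ ((d : ℤ) - 2 * (n : ℤ))} ∧
      EigSet F (π (bx F q 3)) =
        {θ : F | ∃ n : ℕ, n ≤ d ∧ θ = γ⁻¹ * q ^ ((d : ℤ) - 2 * (n : ℤ))} := by
  have hqinv : ∀ n : ℕ, 0 < n → (q⁻¹ ^ 2) ^ n ≠ 1 := fun n hn => by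
    rw [← pow_mul, inv_pow, Ne, inv_eq_one]
    exact hq1 _ (by omega)
  have hne : Nontrivial V := hirr.1
  have hex : ∀ i, ∃ θ, eigenspace (π (bx F q i)) θ ≠ ⊥ := fun i =>
    Module.End.exists_eigenvalue (π (bx F q i))
  refine ⟨fun i => ?_, ?_⟩
  · obtain ⟨θ, hθ⟩ := hex i
    have := sum_eq_top π hq0 hq1 hqinv hirr i Set.univ (by simp) (by simp) (Set.mem_univ θ) hθ
    simpa [SemisimpleOn] using this
  · obtain ⟨θ, hθ⟩ := hex 0
    obtain ⟨d, γ, hγ, h0⟩ := exists_string π hq0 hq1 hqinv hirr 0 hθ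
    -- Inversion exchanges the two strings, reversing the order: `n ↦ d - n`.
    have hinv : ∀ μ : F, (∃ n : ℕ, n ≤ d ∧ μ⁻¹ = γ * q ^ ((d : ℤ) - 2 * (n : ℤ))) ↔
        ∃ n : ℕ, n ≤ d ∧ μ = γ⁻¹ * q ^ ((d : ℤ) - 2 * (n : ℤ)) := by
      have hrev : ∀ n : ℕ, n ≤ d →
          (q ^ ((d : ℤ) - 2 * (n : ℤ)))⁻¹ = q ^ ((d : ℤ) - 2 * ((d - n : ℕ) : ℤ)) := by
        intro n hn
        rw [← zpow_neg]
        congr 1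
        omega
      intro μ
      constructor
      · rintro ⟨n, hn, h⟩
        refine ⟨d - n, by omega, ?_⟩
        rw [← hrev n hn, ← mul_inv, ← h, inv_inv]
      · rintro ⟨n, hn, rfl⟩
        refine ⟨d - n, by omega, ?_⟩
        rw [← hrev n hn, mul_inv, inv_inv]
    have h1 : EigSet F (π (bx F q 1)) =
        {θ : F | ∃ n : ℕ, n ≤ d ∧ θ = γ⁻¹ * q ^ ((d : ℤ) - 2 * (n : ℤ))} := by
      ext μ
      have := eig_inv π hq0 hq1 hqinv 0 μ
      rw [h0, Set.mem_ofPred_eq, hinv] at this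
      exact this
    have h3 : EigSet F (π (bx F q 3)) =
        {θ : F | ∃ n : ℕ, n ≤ d ∧ θ = γ⁻¹ * q ^ ((d : ℤ) - 2 * (n : ℤ))} := by
      ext μ
      have h30 : EigSet F (π (bx F q (3 + 1))) = EigSet F (π (bx F q 0)) := rfl
      have := eig_inv π hq0 hq1 hqinv 3 μ⁻¹
      rw [h30, h0, Set.mem_ofPred_eq, hinv, inv_inv] at this
      exact this.symm
    have h2 : EigSet F (π (bx F q 2)) =
        {θ : F | ∃ n : ℕ, n ≤ d ∧ θ = γ * q ^ ((d : ℤ) - 2 * (n : ℤ))} := by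
      ext μ
      have h12 : EigSet F (π (bx F q (1 + 1))) = EigSet F (π (bx F q 2)) := rfl
      have := eig_inv π hq0 hq1 hqinv 1 μ
      rw [h12, h1, Set.mem_ofPred_eq, ← hinv, inv_inv] at this
      exact this
    exact ⟨d, γ, hγ, h0, h2, h1, h3⟩
end
end

section
/- Let V be a finite-dimensional irreducible □_q-module of type 1 and diameter d. For i ∈ ℤ/4ℤ and 0 ≤ n ≤ d let V_i(n) denote the eigenspace of the action of x_i on V with eigenvalue q^{d−2n}. Then for every i ∈ ℤ/4ℤ and every 0 ≤ n ≤ d, the sum Σ_{m=0}^{n} V_i(m) equals the sum Σ_{m=0}^{n} V_{i−1}(d−m). (In other words, for each i the flag on V induced by the eigenspace decomposition of x_i ordered by eigenvalues q^d, q^{d−2}, …, q^{−d} coincides with the flag induced by the eigenspace decomposition of x_{i−1} ordered by eigenvalues q^{−d}, q^{2−d}, …, q^{d}.) -/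
/-!
Write `A = x_{i-1}` and `B = x_i`, so `q A B - q⁻¹ B A = (q - q⁻¹) 1`. If `A v = θ v` with `θ ≠ 0`,
this relation gives `(A - q⁻² θ) (B - θ⁻¹) v = 0`: the operator `B - θ⁻¹` maps the `θ`-eigenspace of
`A` into its `q⁻² θ`-eigenspace. Symmetrically, `A - μ⁻¹` maps the `μ`-eigenspace of `B` into its
`q² μ`-eigenspace (`eigenspace_lower`, `eigenspace_raise`).

Consequently `B - q^{d-2m}` lowers the index `m` in the chain of eigenspaces of `A` with eigenvalues
`q^{-d}, q^{2-d}, …`, and it kills the bottom one because `q^{-d-2}` is not an eigenvalue of `A`.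
As the numbers `q^{d-2m}` are distinct, each term of the chain lies in the corresponding
partial sum of eigenspaces of `B` (`eigenspace_le_iSup_of_lower`). Exchanging the roles of `A` and `B`
gives the other inclusion.
-/

noncomputable section

open FreeAlgebra

variable (F : Type) [Field F]

/-- The `□_q`-module given by `π` has type `1` and diameter `d`: each generator `x_i`
acts semisimply with set of distinct eigenvalues `{q^(d-2n) : 0 ≤ n ≤ d}`. -/
def Type1Diam (q : F) {V : Type} [AddCommGroup V] [Module F V]
    (π : BoxQ F q →ₐ[F] Module.End F V) (d : ℕ) : Prop :=
  ∀ i : ZMod 4, SemisimpleOn F (π (bx F q i)) ∧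
    EigSet F (π (bx F q i)) =
      {θ : F | ∃ n : ℕ, n ≤ d ∧ θ = q ^ ((d : ℤ) - 2 * (n : ℤ))}

/-- If `g - b m` lowers the index in the chain of eigenspaces of `f` for `a 0, a 1, …` and kills
the bottom one, then each term of the chain lies in the sum of the eigenspaces of `g` up to the same
index. The induction step works because `g - b (n + 1)` is onto on the sum of the eigenspaces of `g`
for `b 0, …, b n`. -/
theorem eigenspace_le_iSup_of_lower {F V : Type} [Field F] [AddCommGroup V] [Module F V]
    (f g : Module.End F V) (a b : ℕ → F) (hb : Function.Injective b)
    (h0 : ∀ v ∈ Module.End.eigenspace f (a 0), g v - b 0 • v = 0)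
    (hs : ∀ m, ∀ v ∈ Module.End.eigenspace f (a (m + 1)),
      g v - b (m + 1) • v ∈ Module.End.eigenspace f (a m)) (n : ℕ) :
    Module.End.eigenspace f (a n) ≤
      ⨆ m : ℕ, ⨆ _ : m ≤ n, Module.End.eigenspace g (b m) := by
  induction n with
  | zero =>
    intro v hv
    have hv' : v ∈ Module.End.eigenspace g (b 0) :=
      Module.End.mem_eigenspace_iff.2 (sub_eq_zero.1 (h0 v hv))
    exact (le_iSup₂_of_le (f := fun m (_ : m ≤ 0) => Module.End.eigenspace g (b m))
      0 le_rfl le_rfl) hv'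
  | succ n ih =>
    intro v hv
    have hsurj : (⨆ m : ℕ, ⨆ _ : m ≤ n, Module.End.eigenspace g (b m)) ≤
        (⨆ m : ℕ, ⨆ _ : m ≤ n, Module.End.eigenspace g (b m)).map
          (g - b (n + 1) • LinearMap.id) := by
      refine iSup₂_le fun m hm w hw => ?_
      have hne : b m - b (n + 1) ≠ 0 := sub_ne_zero.2 fun h => by
        have := hb h
        omega
      refine ⟨(b m - b (n + 1))⁻¹ • w, Submodule.smul_mem _ _
        ((le_iSup₂_of_le (f := fun m (_ : m ≤ n) => Module.End.eigenspace g (b m))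
          m hm le_rfl) hw), ?_⟩
      rw [map_smul, LinearMap.sub_apply, LinearMap.smul_apply, LinearMap.id_apply,
        Module.End.mem_eigenspace_iff.1 hw, ← sub_smul, smul_smul, inv_mul_cancel₀ hne, one_smul]
    obtain ⟨u, hu, huv⟩ := hsurj (ih (hs n v hv))
    have hvu : v - u ∈ Module.End.eigenspace g (b (n + 1)) := by
      rw [Module.End.mem_eigenspace_iff, map_sub, smul_sub]
      simp only [LinearMap.sub_apply, LinearMap.smul_apply, LinearMap.id_apply] at huv
      rw [sub_eq_sub_iff_sub_eq_sub]
      exact huv.symm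
    have hmono : (⨆ m : ℕ, ⨆ _ : m ≤ n, Module.End.eigenspace g (b m)) ≤
        ⨆ m : ℕ, ⨆ _ : m ≤ n + 1, Module.End.eigenspace g (b m) :=
      iSup₂_le fun m hm =>
        le_iSup₂_of_le (f := fun m (_ : m ≤ n + 1) => Module.End.eigenspace g (b m))
          m (by omega) le_rfl
    have htop := (le_iSup₂_of_le
      (f := fun m (_ : m ≤ n + 1) => Module.End.eigenspace g (b m)) (n + 1) le_rfl le_rfl) hvu
    have := Submodule.add_mem _ htop (hmono hu)
    rwa [sub_add_cancel] at this

theorem eigenspace_lower {F V : Type} [Field F] [AddCommGroup V] [Module F V]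
    (A B : Module.End F V) (q : F) (hq0 : q ≠ 0)
    (hrel : q • (A * B) - q⁻¹ • (B * A) = (q - q⁻¹) • (1 : Module.End F V))
    (θ η κ : F) (hη : θ * η = 1) (hκ : q ^ 2 * κ = θ) (v : V)
    (hv : v ∈ Module.End.eigenspace A θ) :
    B v - η • v ∈ Module.End.eigenspace A κ := by
  rw [Module.End.mem_eigenspace_iff] at hv ⊢
  have h := LinearMap.congr_fun hrel v
  simp only [LinearMap.sub_apply, LinearMap.smul_apply, Module.End.mul_apply,
    Module.End.one_apply, hv, map_smul] at h
  have h2 : A (B v) = κ • B v + (1 - (q ^ 2)⁻¹) • v := by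
    have h3 : q • A (B v) = (q⁻¹ * θ) • B v + (q - q⁻¹) • v := by
      rw [← h, mul_smul]; abel
    have h4 := congrArg (fun w => q⁻¹ • w) h3
    simp only [smul_smul, smul_add, inv_mul_cancel₀ hq0, one_smul] at h4
    rw [h4, ← hκ]
    congr 2 <;> field_simp
  rw [map_sub, map_smul, hv, h2]
  have h5 : (1 - (q ^ 2)⁻¹) = η * θ - κ * η := by
    have : κ * η = (q ^ 2)⁻¹ := by
      field_simp
      rw [← hη, ← hκ]; ring
    rw [this, mul_comm η θ, hη]
  rw [h5]
  module

theorem eigenspace_raise {F V : Type} [Field F] [AddCommGroup V] [Module F V]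
    (A B : Module.End F V) (q : F) (hq0 : q ≠ 0)
    (hrel : q • (A * B) - q⁻¹ • (B * A) = (q - q⁻¹) • (1 : Module.End F V))
    (μ η κ : F) (hη : μ * η = 1) (hκ : q ^ 2 * μ = κ) (w : V)
    (hw : w ∈ Module.End.eigenspace B μ) :
    A w - η • w ∈ Module.End.eigenspace B κ := by
  -- The relation is invariant under exchanging `A` with `B` and `q` with `q⁻¹`.
  refine eigenspace_lower B A q⁻¹ (inv_ne_zero hq0) ?_ μ η κ hη ?_ w hw
  · rw [inv_inv, ← neg_sub, hrel, ← neg_smul, neg_sub]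
  · rw [← hκ]; field_simp

theorem zpow_injective_of_not_root {F : Type} [Field F] (q : F) (hq0 : q ≠ 0)
    (hq1 : ∀ n : ℕ, 0 < n → q ^ n ≠ 1) : Function.Injective (fun k : ℤ => q ^ k) := by
  have key : ∀ k l : ℤ, k < l → q ^ k ≠ q ^ l := by
    intro k l hkl h
    apply hq1 (l - k).toNat (by omega)
    rw [← zpow_natCast, Int.toNat_of_nonneg (by omega), zpow_sub₀ hq0, h,
      div_self (zpow_ne_zero _ hq0)]
  intro k l h
  rcases lt_trichotomy k l with hkl | hkl | hkl
  · exact absurd h (key _ _ hkl)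
  · exact hkl
  · exact absurd h.symm (key _ _ hkl)

theorem bx_rel {F : Type} [Field F] {q : F} {V : Type} [AddCommGroup V] [Module F V]
    (π : BoxQ F q →ₐ[F] Module.End F V) (i : ZMod 4) :
    q • (π (bx F q i) * π (bx F q (i + 1))) - q⁻¹ • (π (bx F q (i + 1)) * π (bx F q i)) =
      (q - q⁻¹) • (1 : Module.End F V) := by
  have h := RingQuot.mkAlgHom_rel F (BoxRel.rel1 (F := F) (q := q) i)
  have h2 := congrArg π h
  simpa only [map_sub, map_smul, map_mul, map_one, bx] using h2

/-- For a type-1 irreducible `□_q`-module of diameter `d`, the flag induced by the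
eigenspace decomposition of `x_i` (ordered `q^d, …, q^{-d}`) coincides with the flag
induced by the inverted eigenspace decomposition of `x_{i-1}`. -/
theorem stmt7 [IsAlgClosed F] [CharZero F] (q : F) (hq0 : q ≠ 0)
    (hq1 : ∀ n : ℕ, 0 < n → q ^ n ≠ 1)
    (V : Type) [AddCommGroup V] [Module F V] [FiniteDimensional F V]
    (π : BoxQ F q →ₐ[F] Module.End F V) (hirr : IsIrrep F π)
    (d : ℕ) (hT : Type1Diam F q π d) :
    ∀ i : ZMod 4, ∀ n : ℕ, n ≤ d →
      (⨆ m : ℕ, ⨆ _ : m ≤ n,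
          Module.End.eigenspace (π (bx F q i)) (q ^ ((d : ℤ) - 2 * (m : ℤ)))) =
      (⨆ m : ℕ, ⨆ _ : m ≤ n,
          Module.End.eigenspace (π (bx F q (i - 1)))
            (q ^ ((d : ℤ) - 2 * ((d - m : ℕ) : ℤ)))) := by
  intro i n hn
  have hrel := bx_rel π (i - 1)
  rw [sub_add_cancel] at hrel
  have hinj := zpow_injective_of_not_root q hq0 hq1
  have hbot : ∀ (j : ZMod 4) (k : ℤ), (k < -d ∨ (d : ℤ) < k) →
      Module.End.eigenspace (π (bx F q j)) (q ^ k) = ⊥ := by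
    intro j k hk
    by_contra hne
    have hmem : q ^ k ∈ EigSet F (π (bx F q j)) := hne
    rw [(hT j).2] at hmem
    obtain ⟨m, hm, he⟩ := hmem
    have := hinj he
    omega
  have hB : Function.Injective (fun m : ℕ => q ^ ((d : ℤ) - 2 * (m : ℤ))) := fun m m' h => by
    have := hinj h
    omega
  have hA : Function.Injective (fun m : ℕ => q ^ (2 * (m : ℤ) - (d : ℤ))) := fun m m' h => by
    have := hinj h
    omega
  have hexp : ∀ m ≤ n, (d : ℤ) - 2 * ((d - m : ℕ) : ℤ) = 2 * (m : ℤ) - d := by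
    intro m hm
    omega
  have hright : (⨆ m : ℕ, ⨆ _ : m ≤ n, Module.End.eigenspace (π (bx F q (i - 1)))
      (q ^ ((d : ℤ) - 2 * ((d - m : ℕ) : ℤ)))) =
      ⨆ m : ℕ, ⨆ _ : m ≤ n, Module.End.eigenspace (π (bx F q (i - 1)))
        (q ^ (2 * (m : ℤ) - (d : ℤ))) :=
    iSup_congr fun m => iSup_congr fun hm => by rw [hexp m hm]
  rw [hright]
  have hmul : ∀ k l r : ℤ, k + l = r → q ^ k * q ^ l = q ^ r := by
    intro k l r h
    rw [← zpow_add₀ hq0, h]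
  have hsq : ∀ k r : ℤ, 2 + k = r → q ^ 2 * q ^ k = q ^ r := fun k r h => by
    rw [← hmul 2 k r h, zpow_ofNat]
  apply le_antisymm
  · refine iSup₂_le fun m hm => ?_
    refine (eigenspace_le_iSup_of_lower (π (bx F q i)) (π (bx F q (i - 1)))
      (fun m : ℕ => q ^ ((d : ℤ) - 2 * (m : ℤ))) (fun m : ℕ => q ^ (2 * (m : ℤ) - (d : ℤ))) hA
      ?_ ?_ m).trans (biSup_mono fun _ h => h.trans hm)
    · intro v hv
      have := eigenspace_raise _ _ q hq0 hrel _ (q ^ (2 * ((0 : ℕ) : ℤ) - (d : ℤ)))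
        (q ^ ((d : ℤ) + 2)) (by rw [hmul _ _ 0 (by omega), zpow_zero])
        (hsq _ _ (by omega)) v hv
      rwa [hbot i _ (by omega), Submodule.mem_bot] at this
    · intro m v hv
      exact eigenspace_raise _ _ q hq0 hrel _ _ _ (by rw [hmul _ _ 0 (by omega), zpow_zero])
        (hsq _ _ (by omega)) v hv
  · refine iSup₂_le fun m hm => ?_
    refine (eigenspace_le_iSup_of_lower (π (bx F q (i - 1))) (π (bx F q i))
      (fun m : ℕ => q ^ (2 * (m : ℤ) - (d : ℤ))) (fun m : ℕ => q ^ ((d : ℤ) - 2 * (m : ℤ))) hB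
      ?_ ?_ m).trans (biSup_mono fun _ h => h.trans hm)
    · intro v hv
      have := eigenspace_lower _ _ q hq0 hrel _ (q ^ ((d : ℤ) - 2 * ((0 : ℕ) : ℤ)))
        (q ^ (-(d : ℤ) - 2)) (by rw [hmul _ _ 0 (by omega), zpow_zero])
        (hsq _ _ (by omega)) v hv
      rwa [hbot (i - 1) _ (by omega), Submodule.mem_bot] at this
    · intro m v hv
      exact eigenspace_lower _ _ q hq0 hrel _ _ _ (by rw [hmul _ _ 0 (by omega), zpow_zero])
        (hsq _ _ (by omega)) v hv
end
end

section
/- Let V be a finite-dimensional irreducible □_q-module of type 1 and diameter d. For i ∈ ℤ/4ℤ and 0 ≤ n ≤ d let V_i(n) denote the eigenspace of the action of x_i on V with eigenvalue q^{d−2n}. Then for every i ∈ ℤ/4ℤ and every 0 ≤ n ≤ d, V_i(n) = (Σ_{m=0}^{n} V_i(m)) ∩ (Σ_{m=0}^{d−n} V_{i+1}(m)). -/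
/-!
Write `x = x_i`, `y = x_{i+1}`. The relation `q x y - q⁻¹ y x = q - q⁻¹` says that `y - θ⁻¹` maps
the `θ`-eigenspace of `x` into its `q⁻²θ`-eigenspace, and that `x - θ⁻¹` maps the `θ`-eigenspace
of `y` into its `q²θ`-eigenspace (`shift_right`, `shift_left`). Both chains of eigenspaces end
after finitely many steps, since only the `q^(d-2n)` with `0 ≤ n ≤ d` are eigenvalues. A general
lemma on such chains (`eigenspace_le_of_chain`) then gives
`V_i(n) ≤ ∑_{m ≤ d-n} V_{i+1}(m)` and `V_{i+1}(m) ≤ ∑_{k ≥ d-m} V_i(k)`.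
The first is the inclusion from left to right; the second places the right-hand side inside
`(∑_{m ≤ n} V_i(m)) ⊓ (∑_{k ≥ n} V_i(k))`, which is `V_i(n)` by independence of the eigenspaces.
-/

noncomputable section

open FreeAlgebra

variable (F : Type) [Field F]

open Module.End in
/-- Away from the eigenvalues involved, `g - c` maps a sum of eigenspaces onto itself. -/
lemma exists_sub_smul_eq {F V : Type} [Field F] [AddCommGroup V] [Module F V]
    (g : Module.End F V) (b : ℕ → F) (k : ℕ) (c : F) (hc : ∀ m ≤ k, b m ≠ c)
    (w : V) (hw : w ∈ ⨆ m : ℕ, ⨆ _ : m ≤ k, eigenspace g (b m)) :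
    ∃ u ∈ ⨆ m : ℕ, ⨆ _ : m ≤ k, eigenspace g (b m), g u - c • u = w := by
  have key : (⨆ m : ℕ, ⨆ _ : m ≤ k, eigenspace g (b m)) ≤
      (⨆ m : ℕ, ⨆ _ : m ≤ k, eigenspace g (b m)).map (g - c • (1 : Module.End F V)) := by
    refine iSup₂_le fun m hm v hv => ?_
    refine ⟨(b m - c)⁻¹ • v, Submodule.smul_mem _ _ ?_, ?_⟩
    · exact (le_iSup₂ (f := fun (m : ℕ) (_ : m ≤ k) => eigenspace g (b m)) m hm) hv
    · have h1 : b m - c ≠ 0 := sub_ne_zero.mpr (hc m hm)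
      simp only [LinearMap.sub_apply, map_smul, mem_eigenspace_iff.mp hv, LinearMap.smul_apply,
        Module.End.one_apply]
      rw [← sub_smul, inv_smul_smul₀ h1]
  obtain ⟨u, hu, h⟩ := key hw
  exact ⟨u, hu, by simpa using h⟩

open Module.End in
/-- If `g - b k` lowers a chain of eigenspaces of `f` by one step, killing the bottom one, then
the `k`-th space of the chain lies in the sum of the eigenspaces of `g` for `b 0, …, b k`. -/
lemma eigenspace_le_of_chain {F V : Type} [Field F] [AddCommGroup V] [Module F V]
    (f g : Module.End F V) (a b : ℕ → F) (hb : Function.Injective b)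
    (h0 : ∀ v ∈ eigenspace f (a 0), g v - b 0 • v = 0)
    (hs : ∀ k, ∀ v ∈ eigenspace f (a (k + 1)), g v - b (k + 1) • v ∈ eigenspace f (a k))
    (k : ℕ) : eigenspace f (a k) ≤ ⨆ m : ℕ, ⨆ _ : m ≤ k, eigenspace g (b m) := by
  induction k with
  | zero =>
    intro v hv
    refine (le_iSup₂ (f := fun (m : ℕ) (_ : m ≤ 0) => eigenspace g (b m)) 0 le_rfl) ?_
    exact mem_eigenspace_iff.mpr (sub_eq_zero.mp (h0 v hv))
  | succ k ih =>
    intro v hv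
    obtain ⟨u, hu, huv⟩ := exists_sub_smul_eq g b k (b (k + 1))
      (fun m hm h => by have := hb h; omega) _ (ih (hs k v hv))
    have h1 : v - u ∈ eigenspace g (b (k + 1)) := by
      rw [mem_eigenspace_iff, map_sub, smul_sub, sub_eq_sub_iff_sub_eq_sub]
      exact huv.symm
    rw [← sub_add_cancel v u]
    refine Submodule.add_mem _ ?_ ?_
    · exact (le_iSup₂ (f := fun (m : ℕ) (_ : m ≤ k + 1) => eigenspace g (b m)) _ le_rfl) h1
    · exact (biSup_mono (f := fun m => eigenspace g (b m))
        fun m (hm : m ≤ k) => Nat.le_succ_of_le hm : _ ≤ _) hu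

open Module.End in
lemma shift_right {F V : Type} [Field F] [AddCommGroup V] [Module F V] {q : F} (hq0 : q ≠ 0)
    {x y : Module.End F V} (h : ∀ v, q • x (y v) - q⁻¹ • y (x v) = (q - q⁻¹) • v)
    (θ : F) (hθ : θ ≠ 0) (v : V) (hv : v ∈ eigenspace x θ) :
    y v - θ⁻¹ • v ∈ eigenspace x (θ * q ^ (-2 : ℤ)) := by
  rw [mem_eigenspace_iff] at hv ⊢
  have h1 := h v
  rw [hv, map_smul] at h1
  have h2 : x (y v) = q⁻¹ • ((q - q⁻¹) • v + q⁻¹ • θ • y v) := by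
    rw [← h1, sub_add_cancel, inv_smul_smul₀ hq0]
  rw [map_sub, map_smul, hv, h2, zpow_neg]
  match_scalars <;> field_simp
  ring

open Module.End in
lemma shift_left {F V : Type} [Field F] [AddCommGroup V] [Module F V] {q : F} (hq0 : q ≠ 0)
    {x y : Module.End F V} (h : ∀ v, q • x (y v) - q⁻¹ • y (x v) = (q - q⁻¹) • v)
    (θ : F) (hθ : θ ≠ 0) (v : V) (hv : v ∈ eigenspace y θ) :
    x v - θ⁻¹ • v ∈ eigenspace y (θ * q ^ (2 : ℤ)) := by
  rw [mem_eigenspace_iff] at hv ⊢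
  have h1 := h v
  rw [hv, map_smul] at h1
  have h2 : y (x v) = q • (q • θ • x v - (q - q⁻¹) • v) := by
    rw [← h1, sub_sub_cancel, smul_inv_smul₀ hq0]
  rw [map_sub, map_smul, hv, h2]
  match_scalars <;> field_simp
  ring

lemma zpow_inj_of_not_root {F : Type} [Field F] {q : F} (hq0 : q ≠ 0)
    (hq1 : ∀ n : ℕ, 0 < n → q ^ n ≠ 1) : Function.Injective (fun n : ℤ => q ^ n) := by
  have key : ∀ m n : ℤ, m < n → q ^ m ≠ q ^ n := by
    intro m n hmn h
    refine hq1 (n - m).toNat (by omega) ?_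
    rw [← zpow_natCast, Int.toNat_of_nonneg (by omega), zpow_sub₀ hq0, h,
      div_self (zpow_ne_zero _ hq0)]
  intro m n h
  rcases lt_trichotomy m n with h1 | h1 | h1
  · exact absurd h (key _ _ h1)
  · exact h1
  · exact absurd h.symm (key _ _ h1)

/-- For a type-1 irreducible `□_q`-module of diameter `d`, the `n`-th eigenspace of
`x_i` equals the intersection of the `n`-th component of the flag `[i]` and the
`(d-n)`-th component of the flag `[i+1]`. -/
theorem stmt8 [IsAlgClosed F] [CharZero F] (q : F) (hq0 : q ≠ 0)
    (hq1 : ∀ n : ℕ, 0 < n → q ^ n ≠ 1)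
    (V : Type) [AddCommGroup V] [Module F V] [FiniteDimensional F V]
    (π : BoxQ F q →ₐ[F] Module.End F V) (hirr : IsIrrep F π)
    (d : ℕ) (hT : Type1Diam F q π d) :
    ∀ i : ZMod 4, ∀ n : ℕ, n ≤ d →
      Module.End.eigenspace (π (bx F q i)) (q ^ ((d : ℤ) - 2 * (n : ℤ))) =
      (⨆ m : ℕ, ⨆ _ : m ≤ n,
          Module.End.eigenspace (π (bx F q i)) (q ^ ((d : ℤ) - 2 * (m : ℤ)))) ⊓
      (⨆ m : ℕ, ⨆ _ : m ≤ d - n,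
          Module.End.eigenspace (π (bx F q (i + 1))) (q ^ ((d : ℤ) - 2 * (m : ℤ)))) := by
  intro i n hn
  set x := π (bx F q i) with hx
  set y := π (bx F q (i + 1)) with hy
  have hinj := zpow_inj_of_not_root hq0 hq1
  have hrel : ∀ v, q • x (y v) - q⁻¹ • y (x v) = (q - q⁻¹) • v := by
    intro v
    have h1 := congrArg π (RingQuot.mkAlgHom_rel F (BoxRel.rel1 (q := q) i))
    simp only [map_sub, map_smul, map_mul, map_one] at h1
    exact LinearMap.congr_fun h1 v
  have hbot : ∀ (j : ZMod 4) (e : ℤ), (∀ m : ℕ, m ≤ d → e ≠ (d : ℤ) - 2 * m) →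
      Module.End.eigenspace (π (bx F q j)) (q ^ e) = ⊥ := by
    intro j e he
    by_contra hne
    have h1 : q ^ e ∈ EigSet F (π (bx F q j)) := hne
    rw [(hT j).2] at h1
    obtain ⟨m, hm, h2⟩ := h1
    exact he m hm (hinj h2)
  have hxy : ∀ k : ℕ, Module.End.eigenspace x (q ^ (2 * (k : ℤ) - d)) ≤
      ⨆ m : ℕ, ⨆ _ : m ≤ k, Module.End.eigenspace y (q ^ ((d : ℤ) - 2 * (m : ℤ))) := by
    have hsh : ∀ (k : ℕ) (v : V), v ∈ Module.End.eigenspace x (q ^ (2 * (k : ℤ) - d)) →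
        y v - q ^ ((d : ℤ) - 2 * k) • v ∈
          Module.End.eigenspace x (q ^ (2 * ((k : ℤ) - 1) - d)) := by
      intro k v hv
      have := shift_right hq0 hrel _ (zpow_ne_zero _ hq0) v hv
      rwa [← zpow_neg, ← zpow_add₀ hq0, neg_sub,
        show 2 * (k : ℤ) - d + -2 = 2 * ((k : ℤ) - 1) - d by ring] at this
    refine eigenspace_le_of_chain x y (fun k => q ^ (2 * (k : ℤ) - d))
      (fun m => q ^ ((d : ℤ) - 2 * m)) (fun m m' h => ?_) (fun v hv => ?_) (fun k v hv => ?_)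
    · have := hinj h
      omega
    · have h1 := hsh 0 v hv
      rw [hbot i _ (fun m hm => by push_cast; omega)] at h1
      exact h1
    · have h1 := hsh (k + 1) v hv
      rwa [show 2 * (((k + 1 : ℕ) : ℤ) - 1) - d = 2 * (k : ℤ) - d by push_cast; ring] at h1
  have hyx : ∀ k : ℕ, Module.End.eigenspace y (q ^ ((d : ℤ) - 2 * (k : ℤ))) ≤
      ⨆ m : ℕ, ⨆ _ : m ≤ k, Module.End.eigenspace x (q ^ (2 * (m : ℤ) - d)) := by
    have hsh : ∀ (k : ℕ) (v : V), v ∈ Module.End.eigenspace y (q ^ ((d : ℤ) - 2 * (k : ℤ))) →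
        x v - q ^ (2 * (k : ℤ) - d) • v ∈
          Module.End.eigenspace y (q ^ ((d : ℤ) - 2 * ((k : ℤ) - 1))) := by
      intro k v hv
      have := shift_left hq0 hrel _ (zpow_ne_zero _ hq0) v hv
      rwa [← zpow_neg, ← zpow_add₀ hq0, neg_sub,
        show (d : ℤ) - 2 * k + 2 = (d : ℤ) - 2 * ((k : ℤ) - 1) by ring] at this
    refine eigenspace_le_of_chain y x (fun k => q ^ ((d : ℤ) - 2 * k))
      (fun m => q ^ (2 * (m : ℤ) - d)) (fun m m' h => ?_) (fun v hv => ?_) (fun k v hv => ?_)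
    · have := hinj h
      omega
    · have h1 := hsh 0 v hv
      rw [hbot (i + 1) _ (fun m hm => by push_cast; omega)] at h1
      exact h1
    · have h1 := hsh (k + 1) v hv
      rwa [show (d : ℤ) - 2 * (((k + 1 : ℕ) : ℤ) - 1) = (d : ℤ) - 2 * (k : ℤ) by
        push_cast; ring] at h1
  set E : ℕ → Submodule F V :=
    fun m => Module.End.eigenspace x (q ^ ((d : ℤ) - 2 * (m : ℤ))) with hE
  have hind : iSupIndep E := by
    refine (Module.End.eigenspaces_iSupIndep x).comp
      (f := fun m : ℕ => q ^ ((d : ℤ) - 2 * (m : ℤ))) (fun m m' h => ?_)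
    have := hinj h
    omega
  apply le_antisymm
  · refine le_inf (le_iSup₂ (f := fun (m : ℕ) (_ : m ≤ n) => E m) n le_rfl) ?_
    have h1 := hxy (d - n)
    rwa [show 2 * ((d - n : ℕ) : ℤ) - d = (d : ℤ) - 2 * n by push_cast [hn]; ring] at h1
  · have hY : (⨆ m : ℕ, ⨆ _ : m ≤ d - n,
        Module.End.eigenspace y (q ^ ((d : ℤ) - 2 * (m : ℤ)))) ≤
        ⨆ m ∈ Set.Ici n, E m := by
      refine iSup₂_le fun m hm => (hyx m).trans (iSup₂_le fun k hk => ?_)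
      have h1 : E (d - k) ≤ ⨆ m ∈ Set.Ici n, E m :=
        le_biSup E (show d - k ∈ Set.Ici n from Set.mem_Ici.mpr (by omega))
      refine le_trans (le_of_eq ?_) h1
      rw [hE]
      congr 2
      omega
    have hX : (⨆ m : ℕ, ⨆ _ : m ≤ n, E m) ≤ E n ⊔ ⨆ m ∈ Set.Iio n, E m := by
      refine iSup₂_le fun m hm => ?_
      rcases hm.lt_or_eq with h | rfl
      · exact (le_biSup E (show m ∈ Set.Iio n from h)).trans le_sup_right
      · exact le_sup_left
    have hdis : Disjoint (⨆ m ∈ Set.Iio n, E m) (⨆ m ∈ Set.Ici n, E m) :=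
      hind.disjoint_biSup_biSup (Set.disjoint_left.mpr fun m h1 h2 => by
        simp only [Set.mem_Iio, Set.mem_Ici] at h1 h2
        omega)
    have hle : E n ≤ ⨆ m ∈ Set.Ici n, E m := le_biSup E Set.self_mem_Ici
    -- The modular law reduces the intersection to `E n` and a part that vanishes.
    calc _ ≤ (E n ⊔ ⨆ m ∈ Set.Iio n, E m) ⊓ ⨆ m ∈ Set.Ici n, E m := inf_le_inf hX hY
      _ = E n ⊔ (⨆ m ∈ Set.Iio n, E m) ⊓ ⨆ m ∈ Set.Ici n, E m := sup_inf_assoc_of_le _ hle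
      _ = E n := by rw [hdis.eq_bot, sup_bot_eq]
end
end

section
/- Let V be a finite-dimensional irreducible □_q-module of type 1. Let W be a nonzero F-subspace of V such that x_0·W ⊆ W and x_2·W ⊆ W. Then W = V. -/
/-!
Write `A, B, C, D` for the actions of `x₀, x₁, x₂, x₃`, and `θ n = q ^ (d - 2 n)`.  A `q`-Weyl
relation `q X Y - q⁻¹ Y X = q - q⁻¹` says exactly that `Y - (θ n)⁻¹` maps the `θ n`-eigenspace of
`X` to the `θ (n+1)`-eigenspace and that `X - (θ n)⁻¹` maps the `θ n`-eigenspace of `Y` to the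
`θ (n-1)`-eigenspace (`weyl_up`, `weyl_down`).

Replace `W` by a minimal nonzero subspace invariant under `A` and `C`.  Let `r` and `s` be the least
indices with `W` meeting the `θ r`-eigenspace of `A` and the `θ s`-eigenspace of `C`, and take a
nonzero `w ∈ W` with `C w = θ s w`.  Since `W` lies in the sum of the `A`-eigenspaces of index
`≥ r`, the product of the `B - (θ m)⁻¹` over `r ≤ m ≤ d` kills `w`; since `w` has `C`-index `s`, so
does the product over `0 ≤ m ≤ s`.  Coprimality forces `r ≤ s`, and if `r = s` then `w` is an
eigenvector of `B` (`key`).  The triple `(C, D, A)` satisfies the same relations as `(A, B, C)`, so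
also `s ≤ r`.  Hence `r = s` and `W` contains eigenvectors of both `B` and `D`.

The sum of the subspaces `W ∩ ker (B - θ)` is invariant under `A` and `C` by the shifting property,
and it is nonzero, so by minimality it is `W`; hence `W` is `B`-invariant (`inv_of_eigenvector`), and
likewise `D`-invariant.  Irreducibility of `V` then gives `W = V`.  The cubic relations play no
role.
-/

noncomputable section

open FreeAlgebra

variable (F : Type) [Field F]

open Polynomial in
/-- Two products of linear factors over disjoint sets of distinct roots are coprime, so only `0` is
killed by both. -/
lemma eq_zero_of_prod_kill {F V : Type} [Field F] [AddCommGroup V] [Module F V]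
    (Y : Module.End F V) (t : ℤ → F) (ht : Function.Injective t) (S T : Finset ℤ)
    (hST : Disjoint S T) (v : V)
    (hS : aeval Y (∏ m ∈ S, (X - C (t m))) v = 0)
    (hT : aeval Y (∏ m ∈ T, (X - C (t m))) v = 0) : v = 0 := by
  have hc : IsCoprime (∏ m ∈ S, (X - C (t m))) (∏ m ∈ T, (X - C (t m))) := by
    refine IsCoprime.prod_left fun i hi => IsCoprime.prod_right fun j hj => ?_
    refine pairwise_coprime_X_sub_C ht ?_
    rintro rfl
    exact (Finset.disjoint_left.mp hST hi) hj
  obtain ⟨a, b, hab⟩ := hc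
  have := congrArg (fun p => aeval Y p v) hab
  simpa [hS, hT] using this.symm

lemma weyl_up {F V : Type} [Field F] [AddCommGroup V] [Module F V] {q : F} (hq0 : q ≠ 0)
    {X Y : Module.End F V} (h : q • (X * Y) - q⁻¹ • (Y * X) = (q - q⁻¹) • 1)
    {θ : F} (hθ : θ ≠ 0) {v : V} (hv : X v = θ • v) :
    X (Y v - θ⁻¹ • v) = (q⁻¹ ^ 2 * θ) • (Y v - θ⁻¹ • v) := by
  have h1 := congrArg (fun f : Module.End F V => q⁻¹ • f v) h
  simp only [LinearMap.sub_apply, LinearMap.smul_apply, Module.End.mul_apply, hv, map_smul,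
    Module.End.one_apply, smul_sub, smul_smul, inv_mul_cancel₀ hq0, one_smul] at h1
  rw [map_sub, map_smul, hv, sub_eq_iff_eq_add.mp h1]
  match_scalars <;> field_simp <;> ring

lemma weyl_down {F V : Type} [Field F] [AddCommGroup V] [Module F V] {q : F} (hq0 : q ≠ 0)
    {X Y : Module.End F V} (h : q • (X * Y) - q⁻¹ • (Y * X) = (q - q⁻¹) • 1)
    {θ : F} (hθ : θ ≠ 0) {v : V} (hv : Y v = θ • v) :
    Y (X v - θ⁻¹ • v) = (q ^ 2 * θ) • (X v - θ⁻¹ • v) := by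
  have h1 := congrArg (fun f : Module.End F V => q • f v) h
  simp only [LinearMap.sub_apply, LinearMap.smul_apply, Module.End.mul_apply, hv, map_smul,
    Module.End.one_apply, smul_sub, smul_smul, mul_inv_cancel₀ hq0, one_smul] at h1
  rw [map_sub, map_smul, hv, ← sub_eq_zero]
  rw [← sub_eq_zero] at h1
  rw [← neg_eq_zero, ← h1]
  match_scalars <;> field_simp <;> ring

/-- The `n`-th standard eigenvalue `q ^ (d - 2 n)`, with `n` allowed to be any integer. -/
def stdEig {F : Type} [Field F] (q : F) (d : ℕ) (n : ℤ) : F := q ^ ((d : ℤ) - 2 * n)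

lemma stdEig_ne_zero {F : Type} [Field F] {q : F} (hq0 : q ≠ 0) (d : ℕ) (n : ℤ) :
    stdEig q d n ≠ 0 := zpow_ne_zero _ hq0

lemma stdEig_succ {F : Type} [Field F] {q : F} (hq0 : q ≠ 0) (d : ℕ) (n : ℤ) :
    q⁻¹ ^ 2 * stdEig q d n = stdEig q d (n + 1) := by
  unfold stdEig
  rw [show (d : ℤ) - 2 * (n + 1) = -2 + (d - 2 * n) by ring, zpow_add₀ hq0]
  congr 1
  simp [zpow_neg]

lemma stdEig_pred {F : Type} [Field F] {q : F} (hq0 : q ≠ 0) (d : ℕ) (n : ℤ) :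
    q ^ 2 * stdEig q d n = stdEig q d (n - 1) := by
  unfold stdEig
  rw [show (d : ℤ) - 2 * (n - 1) = 2 + (d - 2 * n) by ring, zpow_add₀ hq0]
  norm_cast

lemma stdEig_injective {F : Type} [Field F] {q : F} (hq0 : q ≠ 0)
    (hq1 : ∀ n : ℕ, 0 < n → q ^ n ≠ 1) (d : ℕ) : Function.Injective (stdEig q d) := by
  have key : ∀ k : ℤ, 0 < k → q ^ k ≠ 1 := by
    intro k hk
    lift k to ℕ using hk.le
    rw [zpow_natCast]
    exact hq1 k (by exact_mod_cast hk)
  have aux : ∀ m n : ℤ, m < n → stdEig q d m ≠ stdEig q d n := by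
    intro m n hmn h
    unfold stdEig at h
    rw [show (d : ℤ) - 2 * m = 2 * (n - m) + (d - 2 * n) by ring, zpow_add₀ hq0] at h
    exact key (2 * (n - m)) (by omega)
      (mul_right_cancel₀ (zpow_ne_zero _ hq0) (h.trans (one_mul _).symm))
  intro m n h
  rcases lt_trichotomy m n with h1 | h1 | h1
  · exact absurd h (aux m n h1)
  · exact h1
  · exact absurd h.symm (aux n m h1)

/-- `f` is diagonalizable with eigenvalues among `stdEig q d n`, `0 ≤ n ≤ d`. -/
def IsStd {F V : Type} [Field F] [AddCommGroup V] [Module F V] (q : F) (d : ℕ)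
    (f : Module.End F V) : Prop :=
  (⨆ θ : F, Module.End.eigenspace f θ) = ⊤ ∧
    ∀ θ v, f v = θ • v → v ≠ 0 → ∃ n : ℤ, 0 ≤ n ∧ n ≤ d ∧ θ = stdEig q d n

section

variable {F V : Type} [Field F] [AddCommGroup V] [Module F V] {q : F} {d : ℕ}

lemma IsStd.index {f : Module.End F V} (hf : IsStd q d f) (hq0 : q ≠ 0)
    (hq1 : ∀ n : ℕ, 0 < n → q ^ n ≠ 1) {n : ℤ} {v : V} (hv : f v = stdEig q d n • v)
    (h0 : v ≠ 0) : 0 ≤ n ∧ n ≤ d := by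
  obtain ⟨m, h1, h2, h3⟩ := hf.2 _ v hv h0
  rw [stdEig_injective hq0 hq1 d h3]
  exact ⟨h1, h2⟩

open Polynomial in
lemma up_kill (hq0 : q ≠ 0) (hq1 : ∀ n : ℕ, 0 < n → q ^ n ≠ 1) {A B : Module.End F V}
    (h : q • (A * B) - q⁻¹ • (B * A) = (q - q⁻¹) • 1) (hA : IsStd q d A) (k : ℕ) :
    ∀ (n : ℤ) (v : V) (S : Finset ℤ), (d : ℤ) + 1 - n ≤ k → A v = stdEig q d n • v →
      Finset.Icc n d ⊆ S → aeval B (∏ m ∈ S, (X - C (stdEig q d m)⁻¹)) v = 0 := by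
  induction k with
  | zero =>
    intro n v S hk hv _
    by_cases h0 : v = 0
    · simp [h0]
    · have := hA.index hq0 hq1 hv h0
      simp at hk
      omega
  | succ k ih =>
    intro n v S hk hv hS
    by_cases h0 : v = 0
    · simp [h0]
    have hn := hA.index hq0 hq1 hv h0
    have hnS : n ∈ S := hS (Finset.mem_Icc.mpr ⟨le_rfl, hn.2⟩)
    have h1 := weyl_up hq0 h (stdEig_ne_zero hq0 d n) hv
    rw [stdEig_succ hq0] at h1
    have h2 := ih (n + 1) _ (S.erase n) (by push_cast at hk; omega) h1 (by
      intro m hm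
      rw [Finset.mem_Icc] at hm
      exact Finset.mem_erase.mpr ⟨by omega, hS (Finset.mem_Icc.mpr ⟨by omega, hm.2⟩)⟩)
    rw [← Finset.prod_erase_mul _ _ hnS, map_mul, Module.End.mul_apply]
    simpa [Algebra.algebraMap_eq_smul_one] using h2

open Polynomial in
lemma down_kill (hq0 : q ≠ 0) (hq1 : ∀ n : ℕ, 0 < n → q ^ n ≠ 1) {B Z : Module.End F V}
    (h : q • (B * Z) - q⁻¹ • (Z * B) = (q - q⁻¹) • 1) (hZ : IsStd q d Z) (k : ℕ) :
    ∀ (n : ℤ) (v : V) (S : Finset ℤ), n + 1 ≤ k → Z v = stdEig q d n • v →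
      Finset.Icc 0 n ⊆ S → aeval B (∏ m ∈ S, (X - C (stdEig q d m)⁻¹)) v = 0 := by
  induction k with
  | zero =>
    intro n v S hk hv _
    by_cases h0 : v = 0
    · simp [h0]
    · have := hZ.index hq0 hq1 hv h0
      simp at hk
      omega
  | succ k ih =>
    intro n v S hk hv hS
    by_cases h0 : v = 0
    · simp [h0]
    have hn := hZ.index hq0 hq1 hv h0
    have hnS : n ∈ S := hS (Finset.mem_Icc.mpr ⟨hn.1, le_rfl⟩)
    have h1 := weyl_down hq0 h (stdEig_ne_zero hq0 d n) hv
    rw [stdEig_pred hq0] at h1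
    have h2 := ih (n - 1) _ (S.erase n) (by push_cast at hk; omega) h1 (by
      intro m hm
      rw [Finset.mem_Icc] at hm
      exact Finset.mem_erase.mpr ⟨by omega, hS (Finset.mem_Icc.mpr ⟨hm.1, by omega⟩)⟩)
    rw [← Finset.prod_erase_mul _ _ hnS, map_mul, Module.End.mul_apply]
    simpa [Algebra.algebraMap_eq_smul_one] using h2

lemma le_iSup_inf_eigenspace [FiniteDimensional F V] {f : Module.End F V}
    (hf : (⨆ θ : F, Module.End.eigenspace f θ) = ⊤) {W : Submodule F V}
    (hW : ∀ v ∈ W, f v ∈ W) : W = ⨆ θ : F, W ⊓ Module.End.eigenspace f θ := by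
  exact Submodule.eq_iSup_inf_genEigenspace (k := 1) hW hf

/-- `r` is the least index of an eigenvalue of `f` with an eigenvector in `W`. -/
def IsLeastIdx (q : F) (d : ℕ) (f : Module.End F V) (W : Submodule F V) (r : ℤ) : Prop :=
  (∃ w ∈ W, w ≠ 0 ∧ f w = stdEig q d r • w) ∧
    ∀ n, ∀ w ∈ W, w ≠ 0 → f w = stdEig q d n • w → r ≤ n

lemma exists_isLeastIdx [FiniteDimensional F V] (hq0 : q ≠ 0)
    (hq1 : ∀ n : ℕ, 0 < n → q ^ n ≠ 1) {f : Module.End F V} (hf : IsStd q d f)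
    {W : Submodule F V} (hW0 : W ≠ ⊥) (hW : ∀ v ∈ W, f v ∈ W) :
    ∃ r, IsLeastIdx q d f W r := by
  have hex : ∃ n : ℤ, ∃ w ∈ W, w ≠ 0 ∧ f w = stdEig q d n • w := by
    by_contra hcon
    push Not at hcon
    apply hW0
    rw [le_iSup_inf_eigenspace hf.1 hW, iSup_eq_bot]
    intro θ
    rw [Submodule.eq_bot_iff]
    rintro v ⟨hv, hv'⟩
    by_contra h0
    rw [SetLike.mem_coe, Module.End.mem_eigenspace_iff] at hv'
    obtain ⟨n, -, -, rfl⟩ := hf.2 θ v hv' h0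
    exact hcon n v hv h0 hv'
  obtain ⟨r, h1, h2⟩ := Int.exists_least_of_bdd
    (P := fun n => ∃ w ∈ W, w ≠ 0 ∧ f w = stdEig q d n • w)
    ⟨0, fun n ⟨w, _, h0, hw⟩ => (hf.index hq0 hq1 hw h0).1⟩ hex
  exact ⟨r, h1, fun n w hw h0 hfw => h2 n ⟨w, hw, h0, hfw⟩⟩

open Polynomial in
/-- Comparison of the least `A`-index and the least `Z`-index on an invariant subspace, through the
operator `B` linked to both by `q`-Weyl relations. -/
lemma key [FiniteDimensional F V] (hq0 : q ≠ 0) (hq1 : ∀ n : ℕ, 0 < n → q ^ n ≠ 1)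
    {A B Z : Module.End F V} (hAB : q • (A * B) - q⁻¹ • (B * A) = (q - q⁻¹) • 1)
    (hBZ : q • (B * Z) - q⁻¹ • (Z * B) = (q - q⁻¹) • 1) (hA : IsStd q d A) (hZ : IsStd q d Z)
    {W : Submodule F V} (hWA : ∀ v ∈ W, A v ∈ W) {r s : ℤ}
    (hr : IsLeastIdx q d A W r) (hs : IsLeastIdx q d Z W s) :
    r ≤ s ∧ (r = s → ∃ w ∈ W, w ≠ 0 ∧ ∃ θ : F, B w = θ • w) := by
  obtain ⟨w, hwW, hw0, hw⟩ := hs.1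
  have hP : aeval B (∏ m ∈ Finset.Icc r d, (X - C (stdEig q d m)⁻¹)) w = 0 := by
    suffices h : W ≤ LinearMap.ker (aeval B (∏ m ∈ Finset.Icc r d, (X - C (stdEig q d m)⁻¹))) from
      h hwW
    rw [le_iSup_inf_eigenspace hA.1 hWA, iSup_le_iff]
    rintro θ v ⟨hv, hv'⟩
    rw [LinearMap.mem_ker]
    by_cases h0 : v = 0
    · simp [h0]
    rw [SetLike.mem_coe, Module.End.mem_eigenspace_iff] at hv'
    obtain ⟨n, hn0, hnd, rfl⟩ := hA.2 θ v hv' h0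
    have hrn := hr.2 n v hv h0 hv'
    exact up_kill hq0 hq1 hAB hA ((d : ℤ) + 1 - n).toNat n v _ (Int.self_le_toNat _) hv'
      (Finset.Icc_subset_Icc_left hrn)
  have hQ := down_kill hq0 hq1 hBZ hZ (s + 1).toNat s w _ (Int.self_le_toNat _) hw subset_rfl
  have hinj : Function.Injective fun m => (stdEig q d m)⁻¹ :=
    inv_injective.comp (stdEig_injective hq0 hq1 d)
  refine ⟨?_, ?_⟩
  · by_contra hlt
    refine hw0 (eq_zero_of_prod_kill B _ hinj _ _ ?_ w hP hQ)
    rw [Finset.disjoint_left]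
    intro m h1 h2
    rw [Finset.mem_Icc] at h1 h2
    omega
  · rintro rfl
    refine ⟨w, hwW, hw0, (stdEig q d r)⁻¹, ?_⟩
    have hrd := hZ.index hq0 hq1 hw hw0
    rw [← Finset.prod_erase_mul _ _ (Finset.mem_Icc.mpr ⟨le_rfl, hrd.2⟩), map_mul,
      Module.End.mul_apply] at hP
    rw [← Finset.prod_erase_mul _ _ (Finset.mem_Icc.mpr ⟨hrd.1, le_rfl⟩), map_mul,
      Module.End.mul_apply] at hQ
    -- The two remaining products, over `r < m ≤ d` and `0 ≤ m < r`, are coprime.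
    have := eq_zero_of_prod_kill B _ hinj _ _ ?_ _ hP hQ
    · simpa [Algebra.algebraMap_eq_smul_one, sub_eq_zero] using this
    rw [Finset.disjoint_left]
    intro m h1 h2
    rw [Finset.mem_erase, Finset.mem_Icc] at h1 h2
    omega

/-- If `W` is minimal among nonzero `A`- and `Z`-invariant subspaces and contains an eigenvector of
`B`, then it is spanned by eigenvectors of `B`, hence `B`-invariant. -/
lemma inv_of_eigenvector (hq0 : q ≠ 0) {A B Z : Module.End F V}
    (hAB : q • (A * B) - q⁻¹ • (B * A) = (q - q⁻¹) • 1)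
    (hBZ : q • (B * Z) - q⁻¹ • (Z * B) = (q - q⁻¹) • 1) (hB : IsStd q d B)
    {W : Submodule F V} (hWA : ∀ v ∈ W, A v ∈ W) (hWZ : ∀ v ∈ W, Z v ∈ W)
    (hmin : ∀ W' ≤ W, W' ≠ ⊥ → (∀ v ∈ W', A v ∈ W') → (∀ v ∈ W', Z v ∈ W') → W' = W)
    (hex : ∃ w ∈ W, w ≠ 0 ∧ ∃ θ : F, B w = θ • w) : ∀ v ∈ W, B v ∈ W := by
  set S : Submodule F V := ⨆ θ : F, W ⊓ Module.End.eigenspace B θ with hSdef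
  have hmem : ∀ (θ : F) (v : V), v ∈ W → B v = θ • v → v ∈ S := fun θ v hv hvB =>
    Submodule.mem_iSup_of_mem θ ⟨hv, Module.End.mem_eigenspace_iff.mpr hvB⟩
  -- To show that an operator maps `S` into a subspace, it suffices to treat eigenvectors of `B`
  -- in `W`.
  have hind : ∀ (f : Module.End F V) (T : Submodule F V),
      (∀ (θ : F) (v : V), θ ≠ 0 → v ∈ W → B v = θ • v → f v ∈ T) → ∀ v ∈ S, f v ∈ T := by
    intro f T hf
    suffices h : S ≤ T.comap f from fun v hv => h hv
    rw [hSdef, iSup_le_iff]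
    rintro θ v ⟨hv, hv'⟩
    rw [SetLike.mem_coe, Module.End.mem_eigenspace_iff] at hv'
    rw [Submodule.mem_comap]
    by_cases h0 : v = 0
    · simp [h0]
    obtain ⟨n, -, -, rfl⟩ := hB.2 θ v hv' h0
    exact hf _ v (stdEig_ne_zero hq0 d n) hv hv'
  have hSA : ∀ v ∈ S, A v ∈ S := hind A S fun θ v hθ hv hv' => by
    have h1 := hmem _ _ (W.sub_mem (hWA v hv) (W.smul_mem θ⁻¹ hv)) (weyl_down hq0 hAB hθ hv')
    simpa using S.add_mem h1 (S.smul_mem θ⁻¹ (hmem θ v hv hv'))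
  have hSZ : ∀ v ∈ S, Z v ∈ S := hind Z S fun θ v hθ hv hv' => by
    have h1 := hmem _ _ (W.sub_mem (hWZ v hv) (W.smul_mem θ⁻¹ hv)) (weyl_up hq0 hBZ hθ hv')
    simpa using S.add_mem h1 (S.smul_mem θ⁻¹ (hmem θ v hv hv'))
  have hS0 : S ≠ ⊥ := by
    obtain ⟨w, hw, h0, θ, hθ⟩ := hex
    exact Submodule.ne_bot_iff _ |>.mpr ⟨w, hmem θ w hw hθ, h0⟩
  have hSW : S = W := hmin S (iSup_le fun θ => inf_le_left) hS0 hSA hSZ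
  have hfin := hind B W fun θ v _ hv hv' => hv' ▸ W.smul_mem θ hv
  rwa [hSW] at hfin

end

lemma bx_weyl {F : Type} [Field F] (q : F) (i : ZMod 4) :
    q • (bx F q i * bx F q (i + 1)) - q⁻¹ • (bx F q (i + 1) * bx F q i) = (q - q⁻¹) • 1 := by
  simpa [bx] using RingQuot.mkAlgHom_rel F (BoxRel.rel1 (F := F) (q := q) i)

/-- The generators `x_i` generate `□_q`, so invariance under each `x_i` is invariance under the
algebra. -/
lemma inv_of_bx {F V : Type} [Field F] [AddCommGroup V] [Module F V] {q : F}
    (π : BoxQ F q →ₐ[F] Module.End F V) (W : Submodule F V)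
    (h : ∀ i, ∀ v ∈ W, π (bx F q i) v ∈ W) (a : BoxQ F q) : ∀ v ∈ W, π a v ∈ W := by
  obtain ⟨p, rfl⟩ := RingQuot.mkAlgHom_surjective F (BoxRel F q) a
  induction p using FreeAlgebra.induction with
  | grade0 c =>
    intro v hv
    rw [AlgHom.commutes, AlgHom.commutes]
    exact W.smul_mem c hv
  | grade1 i => exact h i
  | mul a b ha hb =>
    intro v hv
    rw [map_mul, map_mul]
    exact ha _ (hb v hv)
  | add a b ha hb =>
    intro v hv
    rw [map_add, map_add]
    exact W.add_mem (ha v hv) (hb v hv)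

/-- A nonzero subspace of a type-1 irreducible `□_q`-module invariant under
`x₀` and `x₂` is the whole module. -/
theorem stmt9 [IsAlgClosed F] [CharZero F] (q : F) (hq0 : q ≠ 0)
    (hq1 : ∀ n : ℕ, 0 < n → q ^ n ≠ 1)
    (V : Type) [AddCommGroup V] [Module F V] [FiniteDimensional F V]
    (π : BoxQ F q →ₐ[F] Module.End F V) (hirr : IsIrrep F π)
    (d : ℕ) (hT : Type1Diam F q π d)
    (W : Submodule F V) (hW : W ≠ ⊥)
    (h0 : ∀ v ∈ W, π (bx F q 0) v ∈ W) (h2 : ∀ v ∈ W, π (bx F q 2) v ∈ W) :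
    W = ⊤ := by
  have hstd : ∀ i, IsStd q d (π (bx F q i)) := by
    intro i
    refine ⟨(hT i).1, fun θ v hv hv0 => ?_⟩
    have hmem : θ ∈ EigSet F (π (bx F q i)) := by
      rw [EigSet, Set.mem_ofPred_eq, Submodule.ne_bot_iff]
      exact ⟨v, Module.End.mem_eigenspace_iff.mpr hv, hv0⟩
    rw [(hT i).2] at hmem
    obtain ⟨n, hn, rfl⟩ := hmem
    exact ⟨n, by positivity, by exact_mod_cast hn, rfl⟩
  have hrel : ∀ i j, j = i + 1 →
      q • (π (bx F q i) * π (bx F q j)) - q⁻¹ • (π (bx F q j) * π (bx F q i))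
        = (q - q⁻¹) • 1 := by
    rintro i j rfl
    simpa using congrArg π (bx_weyl q i)
  have h01 := hrel 0 1 (by decide)
  have h12 := hrel 1 2 (by decide)
  have h23 := hrel 2 3 (by decide)
  have h30 := hrel 3 0 (by decide)
  obtain ⟨M, ⟨hMW, hM0, hMA, hMC⟩, hMmin⟩ := exists_minimal_of_wellFoundedLT
    (fun M : Submodule F V => M ≤ W ∧ M ≠ ⊥ ∧ (∀ v ∈ M, π (bx F q 0) v ∈ M) ∧
      ∀ v ∈ M, π (bx F q 2) v ∈ M) ⟨W, le_rfl, hW, h0, h2⟩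
  have hmin : ∀ W' ≤ M, W' ≠ ⊥ → (∀ v ∈ W', π (bx F q 0) v ∈ W') →
      (∀ v ∈ W', π (bx F q 2) v ∈ W') → W' = M := fun W' hle hne hA hC =>
    le_antisymm hle (hMmin ⟨hle.trans hMW, hne, hA, hC⟩ hle)
  obtain ⟨r, hr⟩ := exists_isLeastIdx hq0 hq1 (hstd 0) hM0 hMA
  obtain ⟨s, hs⟩ := exists_isLeastIdx hq0 hq1 (hstd 2) hM0 hMC
  have k1 := key hq0 hq1 h01 h12 (hstd 0) (hstd 2) hMA hr hs
  have k2 := key hq0 hq1 h23 h30 (hstd 2) (hstd 0) hMC hs hr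
  have hrs : r = s := le_antisymm k1.1 k2.1
  have hMB := inv_of_eigenvector hq0 h01 h12 (hstd 1) hMA hMC hmin (k1.2 hrs)
  have hMD := inv_of_eigenvector hq0 h23 h30 (hstd 3) hMC hMA
    (fun W' hle hne hC hA => hmin W' hle hne hA hC) (k2.2 hrs.symm)
  have hall : ∀ i, ∀ v ∈ M, π (bx F q i) v ∈ M := by
    intro i
    fin_cases i
    · exact hMA
    · exact hMB
    · exact hMC
    · exact hMD
  rcases hirr.2 M (inv_of_bx π M hall) with h | h
  · exact absurd h hM0
  · exact top_le_iff.mp (h ▸ hMW)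
end
end
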